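/- arXiv:2001.00410 — 2 statements merged into one kernel-verified Lean document; each statement's English description precedes it below -/
import Mathlib

section
/- Let n ≥ 1 and let f : ℝⁿ → ℝ be a nonnegative, continuous, compactly supported function with ∫_{ℝⁿ} f dx = 1, and let u(t,x) = ∫_{ℝⁿ} (4πt)^{-n/2} exp(-‖x-y‖²/(4t)) f(y) dy. Then the function t ↦ H_n(u(t)) := H(u(t)) - (n/2) log(4πe t) is nonincreasing on (0,∞); indeed (d/dt) H_n(u(t)) = -∫_{ℝⁿ} (Δ log u + n/(2t)) u dx ≤ 0 for every t > 0. -/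
open Real MeasureTheory

/-- The heat semigroup solution on `ℝⁿ` with initial datum `f`. -/
noncomputable def heatSol (n : ℕ) (f : EuclideanSpace ℝ (Fin n) → ℝ)
    (t : ℝ) (x : EuclideanSpace ℝ (Fin n)) : ℝ :=
  ∫ y, (4 * π * t) ^ (-(n : ℝ) / 2) * Real.exp (-‖x - y‖ ^ 2 / (4 * t)) * f y

/-- The Boltzmann–Shannon entropy of the heat solution at time `t`. -/
noncomputable def shannonEntropy (n : ℕ) (f : EuclideanSpace ℝ (Fin n) → ℝ) (t : ℝ) : ℝ :=
  -∫ x, heatSol n f t x * Real.log (heatSol n f t x)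

/-- The Hessian matrix of a function on `ℝⁿ`. -/
noncomputable def hessianMatrix (n : ℕ) (g : EuclideanSpace ℝ (Fin n) → ℝ)
    (x : EuclideanSpace ℝ (Fin n)) : Matrix (Fin n) (Fin n) ℝ :=
  fun i j => iteratedFDeriv ℝ 2 g x ![EuclideanSpace.single i 1, EuclideanSpace.single j 1]

/-- The Laplacian of a function on `ℝⁿ`, i.e. the trace of its Hessian. -/
noncomputable def laplacian (n : ℕ) (g : EuclideanSpace ℝ (Fin n) → ℝ)
    (x : EuclideanSpace ℝ (Fin n)) : ℝ :=
  ∑ i, hessianMatrix n g x i i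

/-!
Along the heat flow `u` of a probability measure, de Bruijn's identity says that the entropy
`-∫ u log u` grows at the rate of the Fisher information `∫ ‖∇ u‖² / u`, which equals
`-∫ (Δ log u) u` because `∫ Δ u = 0`. Subtracting the derivative `n / (2t)` of `(n / 2) log (4πet)`
leaves `-∫ (Δ log u + n / (2t)) u`, whose integrand is nonnegative by the Li–Yau inequality. On `ℝⁿ`
the latter is the Cauchy–Schwarz inequality in the convolution defining `u`. Finite second moment is
what makes the integrations by parts legitimate: by Jensen's inequality `u` decays no faster than a
Gaussian, so `log u` has at most quadratic growth.
-/

open scoped InnerProductSpace Laplacian Gradient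

section Mollification

variable {E F : Type*} [NormedAddCommGroup E] [MeasurableSpace E] [NormedAddCommGroup F]

theorem integrable_comp_sub_of_bounded [BorelSpace E] [SecondCountableTopology E] {μ : Measure E}
    [IsFiniteMeasure μ] {g : E → F} (hg : Continuous g) (hb : ∃ C, ∀ z, ‖g z‖ ≤ C) (x : E) :
    Integrable (fun y => g (x - y)) μ :=
  let ⟨C, hC⟩ := hb
  .of_bound (hg.comp (continuous_const.sub continuous_id)).aestronglyMeasurable C
    (.of_forall fun y => hC (x - y))

variable [NormedSpace ℝ F]

/-- The convolution `g * μ` of a function with a measure. Mathlib's convolution is of two functions;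
taking a measure keeps initial data without a density within reach of the heat flow. -/
noncomputable def mollify (μ : Measure E) (g : E → F) (x : E) : F :=
  ∫ y, g (x - y) ∂μ

theorem norm_mollify_le (μ : Measure E) (g : E → F) (x : E) :
    ‖mollify μ g x‖ ≤ mollify μ (fun z => ‖g z‖) x :=
  norm_integral_le_integral_norm _

variable [BorelSpace E] [SecondCountableTopology E] {μ : Measure E} [IsFiniteMeasure μ] {g : E → F}

theorem continuous_mollify (hg : Continuous g) (hb : ∃ C, ∀ z, ‖g z‖ ≤ C) :
    Continuous (mollify μ g) :=
  let ⟨C, hC⟩ := hb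
  continuous_of_dominated
    (fun x => (integrable_comp_sub_of_bounded hg hb x).aestronglyMeasurable)
    (fun x => .of_forall fun y => hC (x - y)) (integrable_const C)
    (.of_forall fun _ => hg.comp (continuous_id.sub continuous_const))

variable [NormedSpace ℝ E]

theorem hasFDerivAt_mollify (hg : ContDiff ℝ 1 g) (hb : ∃ C, ∀ z, ‖g z‖ ≤ C)
    (hb₁ : ∃ C, ∀ z, ‖fderiv ℝ g z‖ ≤ C) (x : E) :
    HasFDerivAt (mollify μ g) (mollify μ (fderiv ℝ g) x) x := by
  have h_int (z : E) := integrable_comp_sub_of_bounded (μ := μ) hg.continuous hb z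
  have h_int₁ := integrable_comp_sub_of_bounded (μ := μ) (hg.continuous_fderiv one_ne_zero) hb₁ x
  obtain ⟨C, hC⟩ := hb₁
  refine hasFDerivAt_integral_of_dominated_of_fderiv_le (s := Set.univ) (bound := fun _ => C)
    (F' := fun x y => fderiv ℝ g (x - y)) Filter.univ_mem
    (.of_forall fun z => (h_int z).aestronglyMeasurable) (h_int x) h_int₁.aestronglyMeasurable
    (.of_forall fun y z _ => hC (z - y)) (integrable_const C) (.of_forall fun y z _ => ?_)
  exact (hg.differentiable one_ne_zero (z - y)).hasFDerivAt.comp z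
    ((hasFDerivAt_id z).sub_const y)

theorem fderiv_mollify (hg : ContDiff ℝ 1 g) (hb : ∃ C, ∀ z, ‖g z‖ ≤ C)
    (hb₁ : ∃ C, ∀ z, ‖fderiv ℝ g z‖ ≤ C) :
    fderiv ℝ (mollify μ g) = mollify μ (fderiv ℝ g) :=
  funext fun x => (hasFDerivAt_mollify hg hb hb₁ x).fderiv

theorem contDiff_one_mollify (hg : ContDiff ℝ 1 g) (hb : ∃ C, ∀ z, ‖g z‖ ≤ C)
    (hb₁ : ∃ C, ∀ z, ‖fderiv ℝ g z‖ ≤ C) : ContDiff ℝ 1 (mollify μ g) := by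
  rw [contDiff_one_iff_fderiv, fderiv_mollify hg hb hb₁]
  exact ⟨fun x => (hasFDerivAt_mollify hg hb hb₁ x).differentiableAt,
    continuous_mollify (hg.continuous_fderiv one_ne_zero) hb₁⟩

theorem contDiff_two_mollify (hg : ContDiff ℝ 2 g) (hb : ∃ C, ∀ z, ‖g z‖ ≤ C)
    (hb₁ : ∃ C, ∀ z, ‖fderiv ℝ g z‖ ≤ C) (hb₂ : ∃ C, ∀ z, ‖fderiv ℝ (fderiv ℝ g) z‖ ≤ C) :
    ContDiff ℝ 2 (mollify μ g) := by
  have hg₁ : ContDiff ℝ 1 g := hg.of_le one_le_two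
  rw [show (2 : WithTop ℕ∞) = 1 + 1 from one_add_one_eq_two.symm, contDiff_succ_iff_fderiv,
    fderiv_mollify hg₁ hb hb₁]
  exact ⟨fun x => (hasFDerivAt_mollify hg₁ hb hb₁ x).differentiableAt, by simp,
    contDiff_one_mollify (hg.fderiv_right le_rfl) hb₁ hb₂⟩

theorem fderiv_fderiv_mollify_apply [CompleteSpace F] (hg : ContDiff ℝ 2 g)
    (hb : ∃ C, ∀ z, ‖g z‖ ≤ C) (hb₁ : ∃ C, ∀ z, ‖fderiv ℝ g z‖ ≤ C)
    (hb₂ : ∃ C, ∀ z, ‖fderiv ℝ (fderiv ℝ g) z‖ ≤ C) (x v w : E) :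
    fderiv ℝ (fderiv ℝ (mollify μ g)) x v w =
      mollify μ (fun z => fderiv ℝ (fderiv ℝ g) z v w) x := by
  have hg₁ : ContDiff ℝ 1 (fderiv ℝ g) := hg.fderiv_right le_rfl
  have h_int := integrable_comp_sub_of_bounded (μ := μ) (hg₁.continuous_fderiv one_ne_zero) hb₂ x
  rw [fderiv_mollify (hg.of_le one_le_two) hb hb₁, fderiv_mollify hg₁ hb₁ hb₂, mollify, mollify,
    ContinuousLinearMap.integral_apply h_int,
    ContinuousLinearMap.integral_apply (h_int.apply_continuousLinearMap v)]

end Mollification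

theorem one_add_norm_sq_le {E : Type*} [SeminormedAddCommGroup E] (x y : E) :
    1 + ‖x‖ ^ 2 ≤ 2 * ((1 + ‖x - y‖ ^ 2) * (1 + ‖y‖ ^ 2)) := by
  have h_tri : ‖x‖ ≤ ‖x - y‖ + ‖y‖ := by simpa using norm_add_le (x - y) y
  nlinarith [sq_nonneg (‖x - y‖ - ‖y‖), norm_nonneg x, sq_nonneg (‖x - y‖ * ‖y‖)]

section MollificationIntegrability

variable {E F : Type*} [NormedAddCommGroup E] [InnerProductSpace ℝ E] [FiniteDimensional ℝ E]
  [MeasurableSpace E] [BorelSpace E] [NormedAddCommGroup F] [NormedSpace ℝ F] {μ : Measure E}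

theorem integrable_comp_sub_mul_prod [SFinite μ] {G h : E → ℝ} (hG : Integrable G)
    (hh : Integrable h μ) :
    Integrable (fun p : E × E => G (p.1 - p.2) * h p.2) (volume.prod μ) :=
  (measurePreserving_sub_prod volume μ).integrable_comp_of_integrable (hG.mul_prod hh)

theorem integrable_comp_sub_prod [IsFiniteMeasure μ] {g : E → ℝ} (hg : Integrable g) :
    Integrable (fun p : E × E => g (p.1 - p.2)) (volume.prod μ) := by
  simpa using integrable_comp_sub_mul_prod hg (integrable_const (1 : ℝ))

theorem integrable_mollify [IsFiniteMeasure μ] {g : E → ℝ} (hg : Integrable g) :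
    Integrable (mollify μ g) :=
  (integrable_comp_sub_prod hg).integral_prod_left

theorem integral_mollify [IsFiniteMeasure μ] {g : E → ℝ} (hg : Integrable g) :
    ∫ x, mollify μ g x = μ.real Set.univ * ∫ z, g z := by
  simp only [mollify]
  rw [integral_integral_swap (integrable_comp_sub_prod hg)]
  simp [integral_sub_right_eq_self]

theorem integrable_smul_mollify [IsFiniteMeasure μ] (hμ : Integrable (fun y => ‖y‖ ^ 2) μ)
    {g : E → F} (hg : Continuous g) (hg_int : Integrable fun z => (1 + ‖z‖ ^ 2) * ‖g z‖)
    {φ : E → ℝ} (hφ : Continuous φ) {C : ℝ} (hC : ∀ x, |φ x| ≤ C * (1 + ‖x‖ ^ 2)) :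
    Integrable fun x => φ x • mollify μ g x := by
  have h_prod : Integrable (fun p : E × E => φ p.1 • g (p.1 - p.2)) (volume.prod μ) := by
    refine ((integrable_comp_sub_mul_prod hg_int
      ((integrable_const 1).add hμ)).const_mul (2 * |C|)).mono' (by fun_prop) ?_
    refine .of_forall fun p => ?_
    calc ‖φ p.1 • g (p.1 - p.2)‖ = |φ p.1| * ‖g (p.1 - p.2)‖ := norm_smul _ _
      _ ≤ (|C| * (2 * ((1 + ‖p.1 - p.2‖ ^ 2) * (1 + ‖p.2‖ ^ 2)))) * ‖g (p.1 - p.2)‖ := by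
        gcongr
        exact (hC p.1).trans (mul_le_mul (le_abs_self C) (one_add_norm_sq_le _ _)
          (by positivity) (abs_nonneg C))
      _ = 2 * |C| * ((1 + ‖p.1 - p.2‖ ^ 2) * ‖g (p.1 - p.2)‖ * (1 + ‖p.2‖ ^ 2)) := by ring
  simpa only [mollify, integral_smul] using h_prod.integral_prod_left

end MollificationIntegrability

section VectorCalculus

variable {E : Type*} [NormedAddCommGroup E] [InnerProductSpace ℝ E]

theorem gradient_log [CompleteSpace E] {g : E → ℝ} {x : E} (hg : DifferentiableAt ℝ g x)
    (hx : g x ≠ 0) : ∇ (fun y => log (g y)) x = (g x)⁻¹ • ∇ g x := by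
  simp [gradient, fderiv.log hg hx]

theorem norm_gradient [CompleteSpace E] (g : E → ℝ) (x : E) : ‖∇ g x‖ = ‖fderiv ℝ g x‖ :=
  LinearIsometryEquiv.norm_map _ _

variable [FiniteDimensional ℝ E]

theorem laplacian_eq_sum_fderiv_fderiv {F ι : Type*} [NormedAddCommGroup F] [NormedSpace ℝ F]
    [Fintype ι] (b : OrthonormalBasis ι ℝ E) (g : E → F) (x : E) :
    Δ g x = ∑ i, fderiv ℝ (fderiv ℝ g) x (b i) (b i) := by
  simp [InnerProductSpace.laplacian_eq_iteratedFDeriv_orthonormalBasis g b,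
    iteratedFDeriv_two_apply]

theorem laplacian_log {g : E → ℝ} (hg : ContDiff ℝ 2 g) (h_ne : ∀ x, g x ≠ 0) (x : E) :
    Δ (fun y => log (g y)) x = Δ g x / g x - ‖∇ g x‖ ^ 2 / g x ^ 2 := by
  let b := stdOrthonormalBasis ℝ E
  have hg₁ : Differentiable ℝ g := hg.differentiable two_ne_zero
  have hg₂ : DifferentiableAt ℝ (fderiv ℝ g) x :=
    (hg.fderiv_right le_rfl).differentiable one_ne_zero x
  have h_fderiv : fderiv ℝ (fun y => log (g y)) = fun y => (g y)⁻¹ • fderiv ℝ g y :=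
    funext fun y => fderiv.log (hg₁ y) (h_ne y)
  have h_inv : HasFDerivAt (fun y => (g y)⁻¹) (-(g x ^ 2)⁻¹ • fderiv ℝ g x) x :=
    (hasDerivAt_inv (h_ne x)).comp_hasFDerivAt x (hg₁ x).hasFDerivAt
  have h_sum : ∑ i, (fderiv ℝ g x (b i)) ^ 2 = ‖∇ g x‖ ^ 2 := by
    simp [← b.sum_sq_inner_left, inner_gradient_left]
  have h_term (i) : fderiv ℝ (fderiv ℝ fun y => log (g y)) x (b i) (b i) =
      fderiv ℝ (fderiv ℝ g) x (b i) (b i) / g x - (fderiv ℝ g x (b i)) ^ 2 / g x ^ 2 := by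
    rw [h_fderiv, fderiv_fun_smul h_inv.differentiableAt hg₂, h_inv.fderiv]
    simp only [neg_smul, add_apply, smul_apply, ContinuousLinearMap.smulRight_apply, neg_apply,
      smul_eq_mul]
    ring
  simp_rw [laplacian_eq_sum_fderiv_fderiv b, h_term, Finset.sum_sub_distrib, ← Finset.sum_div,
    h_sum]

variable [MeasurableSpace E] [BorelSpace E]

theorem laplacian_mollify {F : Type*} [NormedAddCommGroup F] [NormedSpace ℝ F] [CompleteSpace F]
    {μ : Measure E} [IsFiniteMeasure μ] {g : E → F} (hg : ContDiff ℝ 2 g)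
    (hb : ∃ C, ∀ z, ‖g z‖ ≤ C) (hb₁ : ∃ C, ∀ z, ‖fderiv ℝ g z‖ ≤ C)
    (hb₂ : ∃ C, ∀ z, ‖fderiv ℝ (fderiv ℝ g) z‖ ≤ C) (x : E) :
    Δ (mollify μ g) x = mollify μ (Δ g) x := by
  let b := stdOrthonormalBasis ℝ E
  have h_int (i) : Integrable (fun y => fderiv ℝ (fderiv ℝ g) (x - y) (b i) (b i)) μ :=
    ((integrable_comp_sub_of_bounded ((hg.fderiv_right le_rfl).continuous_fderiv one_ne_zero)
      hb₂ x).apply_continuousLinearMap (b i)).apply_continuousLinearMap (b i)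
  simp_rw [laplacian_eq_sum_fderiv_fderiv b, fderiv_fderiv_mollify_apply hg hb hb₁ hb₂]
  simp_rw [mollify, laplacian_eq_sum_fderiv_fderiv b]
  rw [integral_finsetSum _ fun i _ => h_int i]

theorem integral_mul_laplacian_eq_neg {φ g : E → ℝ} (hφ : Differentiable ℝ φ)
    (hg : ContDiff ℝ 2 g) (h₀ : Integrable fun x => ‖∇ φ x‖ * ‖∇ g x‖)
    (h₁ : ∀ v, Integrable fun x => φ x * fderiv ℝ g x v)
    (h₂ : ∀ v, Integrable fun x => φ x * fderiv ℝ (fderiv ℝ g) x v v) :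
    ∫ x, φ x * Δ g x = -∫ x, ⟪∇ φ x, ∇ g x⟫_ℝ := by
  let b := stdOrthonormalBasis ℝ E
  have hg₁ : ContDiff ℝ 1 (fderiv ℝ g) := hg.fderiv_right le_rfl
  have h_inner (x) : ⟪∇ φ x, ∇ g x⟫_ℝ = ∑ i, fderiv ℝ φ x (b i) * fderiv ℝ g x (b i) := by
    rw [← b.sum_inner_mul_inner]
    refine Finset.sum_congr rfl fun i _ => ?_
    rw [inner_gradient_left, real_inner_comm, inner_gradient_left]
  have h_left (i) : Integrable fun x => fderiv ℝ φ x (b i) * fderiv ℝ g x (b i) := by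
    refine h₀.mono' ((measurable_fderiv_apply_const ℝ φ (b i)).mul
      (measurable_fderiv_apply_const ℝ g (b i))).aestronglyMeasurable (.of_forall fun x => ?_)
    have h_unit := b.norm_eq_one i
    rw [norm_mul, norm_gradient, norm_gradient]
    gcongr <;> exact ContinuousLinearMap.unit_le_opNorm _ _ h_unit.le
  have h_fderiv (i) (x) :
      fderiv ℝ (fun y => fderiv ℝ g y (b i)) x (b i) = fderiv ℝ (fderiv ℝ g) x (b i) (b i) := by
    rw [fderiv_clm_apply (hg₁.differentiable one_ne_zero x) (differentiableAt_const _)]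
    simp
  have h_parts (i) : ∫ x, φ x * fderiv ℝ (fderiv ℝ g) x (b i) (b i) =
      -∫ x, fderiv ℝ φ x (b i) * fderiv ℝ g x (b i) := by
    simp_rw [← h_fderiv]
    refine integral_mul_fderiv_eq_neg_fderiv_mul_of_integrable (h_left i) ?_
      (h₁ (b i)) (fun x _ => hφ x)
      fun x _ => (hg₁.clm_apply contDiff_const).differentiable one_ne_zero x
    simpa only [h_fderiv] using h₂ (b i)
  simp_rw [h_inner, laplacian_eq_sum_fderiv_fderiv b, Finset.mul_sum]
  rw [integral_finsetSum _ fun i _ => h₂ (b i), integral_finsetSum _ fun i _ => h_left i,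
    ← Finset.sum_neg_distrib]
  exact Finset.sum_congr rfl fun i _ => h_parts i

end VectorCalculus

section GaussianDecay

variable {E F : Type*} [NormedAddCommGroup E] [NormedAddCommGroup F]

/-- `g` is bounded by a multiple of a centred Gaussian: the decay that the derivatives of the heat
kernel share, and that provides integrable majorants against polynomial weights. -/
def HasGaussianDecay (g : E → F) : Prop :=
  ∃ C b : ℝ, 0 < b ∧ ∀ z, ‖g z‖ ≤ C * exp (-b * ‖z‖ ^ 2)

namespace HasGaussianDecay

theorem mono {F' : Type*} [NormedAddCommGroup F'] {g : E → F} {h : E → F'}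
    (hg : HasGaussianDecay g) (hh : ∃ C, ∀ z, ‖h z‖ ≤ C * ‖g z‖) : HasGaussianDecay h := by
  obtain ⟨C, b, hb, hC⟩ := hg
  obtain ⟨D, hD⟩ := hh
  refine ⟨|D| * C, b, hb, fun z => ?_⟩
  calc ‖h z‖ ≤ |D| * ‖g z‖ := (hD z).trans (by gcongr; exact le_abs_self D)
    _ ≤ |D| * C * exp (-b * ‖z‖ ^ 2) := by
      rw [mul_assoc]
      gcongr
      exact hC z

theorem one_add_norm_sq_mul_norm {g : E → F} (hg : HasGaussianDecay g) :
    HasGaussianDecay fun z => (1 + ‖z‖ ^ 2) * ‖g z‖ := by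
  obtain ⟨C, b, hb, hC⟩ := hg
  refine ⟨(1 + 2 / b) * |C|, b / 2, half_pos hb, fun z => ?_⟩
  have h_weight : 1 + ‖z‖ ^ 2 ≤ (1 + 2 / b) * exp (b / 2 * ‖z‖ ^ 2) := by
    have h_one : 1 ≤ exp (b / 2 * ‖z‖ ^ 2) := one_le_exp (by positivity)
    have h_sq : ‖z‖ ^ 2 ≤ 2 / b * exp (b / 2 * ‖z‖ ^ 2) := by
      calc ‖z‖ ^ 2 = 2 / b * (b / 2 * ‖z‖ ^ 2) := by field_simp
        _ ≤ 2 / b * exp (b / 2 * ‖z‖ ^ 2) := by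
          gcongr
          linarith [add_one_le_exp (b / 2 * ‖z‖ ^ 2)]
    linarith
  have h_exp : exp (b / 2 * ‖z‖ ^ 2) * exp (-b * ‖z‖ ^ 2) = exp (-(b / 2) * ‖z‖ ^ 2) := by
    rw [← exp_add]
    ring_nf
  calc ‖(1 + ‖z‖ ^ 2) * ‖g z‖‖ = (1 + ‖z‖ ^ 2) * ‖g z‖ := norm_of_nonneg (by positivity)
    _ ≤ ((1 + 2 / b) * exp (b / 2 * ‖z‖ ^ 2)) * (|C| * exp (-b * ‖z‖ ^ 2)) := by
      gcongr
      exact (hC z).trans (by gcongr; exact le_abs_self C)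
    _ = (1 + 2 / b) * |C| * (exp (b / 2 * ‖z‖ ^ 2) * exp (-b * ‖z‖ ^ 2)) := by ring
    _ = (1 + 2 / b) * |C| * exp (-(b / 2) * ‖z‖ ^ 2) := by rw [h_exp]

theorem bounded {g : E → F} (hg : HasGaussianDecay g) : ∃ C, ∀ z, ‖g z‖ ≤ C := by
  obtain ⟨C, b, hb, hC⟩ := hg
  refine ⟨|C|, fun z => (hC z).trans ?_⟩
  calc C * exp (-b * ‖z‖ ^ 2) ≤ |C| * 1 := by
        gcongr
        · exact le_abs_self C
        · exact exp_le_one_iff.2 (mul_nonpos_of_nonpos_of_nonneg (by linarith) (by positivity))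
    _ = |C| := mul_one _

theorem integrable {E : Type*} [NormedAddCommGroup E] [InnerProductSpace ℝ E]
    [FiniteDimensional ℝ E] [MeasurableSpace E] [BorelSpace E] {g : E → F}
    (hg : HasGaussianDecay g) (hg_cont : Continuous g) : Integrable g := by
  obtain ⟨C, b, hb, hC⟩ := hg
  have h_gaussian : Integrable fun z : E => exp (-b * ‖z‖ ^ 2) := by
    refine Integrable.of_integral_ne_zero ?_
    rw [GaussianFourier.integral_rexp_neg_mul_sq_norm hb]
    positivity
  exact (h_gaussian.const_mul C).mono' hg_cont.aestronglyMeasurable (.of_forall hC)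

end HasGaussianDecay

end GaussianDecay

section HeatKernel

variable {E : Type*} [NormedAddCommGroup E] [InnerProductSpace ℝ E]

/-- The heat kernel `(4πt)^(-n/2) exp(-‖z‖²/(4t))` on an `n`-dimensional Euclidean space. -/
noncomputable def heatKernel (t : ℝ) (z : E) : ℝ :=
  (4 * π * t) ^ (-(Module.finrank ℝ E : ℝ) / 2) * exp (-‖z‖ ^ 2 / (4 * t))

variable {t : ℝ}

theorem heatKernel_pos (ht : 0 < t) (z : E) : 0 < heatKernel t z := by
  unfold heatKernel
  positivity

theorem norm_heatKernel (ht : 0 < t) (z : E) : ‖heatKernel t z‖ = heatKernel t z :=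
  norm_of_nonneg (heatKernel_pos ht z).le

theorem heatKernel_le (ht : 0 < t) (z : E) :
    heatKernel t z ≤ (4 * π * t) ^ (-(Module.finrank ℝ E : ℝ) / 2) :=
  mul_le_of_le_one_right (by positivity)
    (exp_le_one_iff.2 (div_nonpos_of_nonpos_of_nonneg (by simp) (by positivity)))

theorem heatKernel_le_two_pow_mul {s : ℝ} (ht : 0 < t) (hs : s ∈ Set.Icc (t / 2) (2 * t)) (z : E) :
    heatKernel s z ≤ 2 ^ Module.finrank ℝ E * heatKernel (2 * t) z := by
  have hs_pos : 0 < s := (half_pos ht).trans_le hs.1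
  have h_pow : (4 * π * s) ^ (-(Module.finrank ℝ E : ℝ) / 2) ≤
      2 ^ Module.finrank ℝ E * (4 * π * (2 * t)) ^ (-(Module.finrank ℝ E : ℝ) / 2) := by
    have h_two : (2 : ℝ) ^ Module.finrank ℝ E = (1 / 4) ^ (-(Module.finrank ℝ E : ℝ) / 2) := by
      rw [show (1 / 4 : ℝ) = 2 ^ (-2 : ℝ) by norm_num, ← rpow_mul two_pos.le, ← rpow_natCast]
      ring_nf
    rw [h_two, ← mul_rpow (by norm_num) (by positivity)]
    refine rpow_le_rpow_of_nonpos (by positivity) ?_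
      (div_nonpos_of_nonpos_of_nonneg (by simp) two_pos.le)
    nlinarith [pi_pos, hs.1]
  have h_exp : exp (-‖z‖ ^ 2 / (4 * s)) ≤ exp (-‖z‖ ^ 2 / (4 * (2 * t))) := by
    rw [exp_le_exp, neg_div, neg_div, neg_le_neg_iff]
    gcongr
    exact hs.2
  unfold heatKernel
  rw [← mul_assoc]
  gcongr

theorem hasGaussianDecay_heatKernel (ht : 0 < t) : HasGaussianDecay (heatKernel t : E → ℝ) := by
  refine ⟨(4 * π * t) ^ (-(Module.finrank ℝ E : ℝ) / 2), (4 * t)⁻¹, by positivity, fun z => ?_⟩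
  rw [norm_heatKernel ht, heatKernel, neg_mul, inv_mul_eq_div, neg_div (4 * t)]

theorem contDiff_heatKernel {k : WithTop ℕ∞} : ContDiff ℝ k (heatKernel t : E → ℝ) :=
  contDiff_const.mul ((contDiff_norm_sq ℝ).neg.div_const _).exp

theorem hasFDerivAt_heatKernel (ht : 0 < t) (z : E) :
    HasFDerivAt (heatKernel t) ((-(heatKernel t z) / (2 * t)) • innerSL ℝ z) z := by
  have h_exponent : HasFDerivAt (fun y : E => -‖y‖ ^ 2 / (4 * t)) _ z :=
    (hasStrictFDerivAt_norm_sq z).hasFDerivAt.neg.mul_const (4 * t)⁻¹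
  refine (h_exponent.exp.const_mul _).congr_fderiv ?_
  ext v
  simp only [mul_inv_rev, smul_neg, neg_apply, smul_apply, coe_innerSL_apply, nsmul_eq_mul,
    Nat.cast_ofNat, smul_eq_mul, heatKernel]
  field_simp
  ring

theorem fderiv_heatKernel (ht : 0 < t) :
    fderiv ℝ (heatKernel t : E → ℝ) = fun z => (-(heatKernel t z) / (2 * t)) • innerSL ℝ z :=
  funext fun z => (hasFDerivAt_heatKernel ht z).fderiv

theorem norm_fderiv_heatKernel (ht : 0 < t) (z : E) :
    ‖fderiv ℝ (heatKernel t) z‖ = ‖z‖ / (2 * t) * heatKernel t z := by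
  rw [fderiv_heatKernel ht, norm_smul, innerSL_apply_norm, norm_div, norm_neg, norm_heatKernel ht,
    norm_of_nonneg (by positivity)]
  ring

theorem fderiv_fderiv_heatKernel_apply (ht : 0 < t) (z v w : E) :
    fderiv ℝ (fderiv ℝ (heatKernel t)) z v w =
      (⟪z, v⟫_ℝ * ⟪z, w⟫_ℝ / (4 * t ^ 2) - ⟪v, w⟫_ℝ / (2 * t)) * heatKernel t z := by
  have h_coeff : HasFDerivAt (fun y => -(heatKernel t y) / (2 * t)) _ z :=
    (hasFDerivAt_heatKernel ht z).neg.mul_const (2 * t)⁻¹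
  have h_inner : HasFDerivAt (fun y : E => innerSL ℝ y) (innerSL ℝ) z :=
    (innerSL ℝ).hasFDerivAt
  have h_apply : (innerSL ℝ : E →L[ℝ] E →L[ℝ] ℝ) v w = ⟪v, w⟫_ℝ := rfl
  rw [fderiv_heatKernel ht, (h_coeff.fun_smul h_inner).fderiv]
  simp only [mul_inv_rev, smul_neg, add_apply, smul_apply, ContinuousLinearMap.smulRight_apply,
    neg_apply, coe_innerSL_apply, smul_eq_mul, neg_smul, h_apply]
  field_simp
  ring

theorem laplacian_heatKernel [FiniteDimensional ℝ E] (ht : 0 < t) (z : E) :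
    Δ (heatKernel t : E → ℝ) z =
      (‖z‖ ^ 2 / (4 * t ^ 2) - Module.finrank ℝ E / (2 * t)) * heatKernel t z := by
  let b := stdOrthonormalBasis ℝ E
  simp_rw [laplacian_eq_sum_fderiv_fderiv b, fderiv_fderiv_heatKernel_apply ht, ← Finset.sum_mul,
    Finset.sum_sub_distrib, ← Finset.sum_div, ← sq, b.sum_sq_inner_left]
  simp

theorem hasDerivAt_heatKernel [FiniteDimensional ℝ E] (ht : 0 < t) (z : E) :
    HasDerivAt (fun s => heatKernel s z) (Δ (heatKernel t : E → ℝ) z) t := by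
  have h_four : 4 * t ≠ 0 := by positivity
  have h_four_pi : 4 * π * t ≠ 0 := by positivity
  have h_pow : HasDerivAt (fun s : ℝ => (4 * π * s) ^ (-(Module.finrank ℝ E : ℝ) / 2)) _ t :=
    ((hasDerivAt_id t).const_mul (4 * π)).rpow_const (.inl h_four_pi)
  have h_exp : HasDerivAt (fun s : ℝ => exp (-‖z‖ ^ 2 / (4 * s))) _ t :=
    ((hasDerivAt_const t (-‖z‖ ^ 2)).div ((hasDerivAt_id t).const_mul 4) h_four).exp
  refine (h_pow.mul h_exp).congr_deriv ?_
  rw [laplacian_heatKernel ht, heatKernel, id_eq, rpow_sub_one h_four_pi]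
  simp only [mul_one, id_eq, Pi.div_apply, zero_mul, neg_mul, sub_neg_eq_add, zero_add]
  field_simp
  ring

end HeatKernel

section HeatKernelEstimates

variable {E : Type*} [NormedAddCommGroup E] [InnerProductSpace ℝ E] {t : ℝ}

theorem hasGaussianDecay_fderiv_heatKernel (ht : 0 < t) :
    HasGaussianDecay (fderiv ℝ (heatKernel t : E → ℝ)) := by
  refine (hasGaussianDecay_heatKernel ht).one_add_norm_sq_mul_norm.mono ⟨1 / (2 * t), fun z => ?_⟩
  rw [norm_fderiv_heatKernel ht, norm_heatKernel ht, norm_mul, norm_heatKernel ht,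
    norm_of_nonneg (by positivity)]
  have hK := (heatKernel_pos ht z).le
  calc ‖z‖ / (2 * t) * heatKernel t z ≤ (1 + ‖z‖ ^ 2) / (2 * t) * heatKernel t z := by
        gcongr
        nlinarith [sq_nonneg (‖z‖ - 1), norm_nonneg z]
    _ = 1 / (2 * t) * ((1 + ‖z‖ ^ 2) * heatKernel t z) := by ring

theorem hasGaussianDecay_fderiv_fderiv_heatKernel (ht : 0 < t) :
    HasGaussianDecay (fderiv ℝ (fderiv ℝ (heatKernel t : E → ℝ))) := by
  refine (hasGaussianDecay_heatKernel ht).one_add_norm_sq_mul_norm.mono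
    ⟨1 / (4 * t ^ 2) + 1 / (2 * t), fun z => ?_⟩
  have hK := (heatKernel_pos ht z).le
  refine ContinuousLinearMap.opNorm_le_bound₂ _ (by positivity) fun v w => ?_
  rw [fderiv_fderiv_heatKernel_apply ht, norm_mul, norm_mul, norm_norm, norm_heatKernel ht,
    norm_of_nonneg (by positivity : (0 : ℝ) ≤ 1 + ‖z‖ ^ 2)]
  have h_coeff : ‖⟪z, v⟫_ℝ * ⟪z, w⟫_ℝ / (4 * t ^ 2) - ⟪v, w⟫_ℝ / (2 * t)‖ ≤
      ‖z‖ * ‖v‖ * (‖z‖ * ‖w‖) / (4 * t ^ 2) + ‖v‖ * ‖w‖ / (2 * t) := by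
    refine (norm_sub_le _ _).trans ?_
    rw [norm_div, norm_div, norm_mul, norm_of_nonneg (by positivity : 0 ≤ 4 * t ^ 2),
      norm_of_nonneg (by positivity : 0 ≤ 2 * t)]
    gcongr <;> exact norm_inner_le_norm _ _
  calc _ ≤ (‖z‖ * ‖v‖ * (‖z‖ * ‖w‖) / (4 * t ^ 2) + ‖v‖ * ‖w‖ / (2 * t)) * heatKernel t z := by
        gcongr
    _ = (‖z‖ ^ 2 * (1 / (4 * t ^ 2)) + 1 * (1 / (2 * t))) * heatKernel t z * ‖v‖ * ‖w‖ := by ring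
    _ ≤ ((1 + ‖z‖ ^ 2) * (1 / (4 * t ^ 2)) + (1 + ‖z‖ ^ 2) * (1 / (2 * t))) *
          heatKernel t z * ‖v‖ * ‖w‖ := by
        gcongr
        · linarith
        · nlinarith [norm_nonneg z]
    _ = _ := by ring

theorem hasGaussianDecay_fderiv_fderiv_heatKernel_apply (ht : 0 < t) (v w : E) :
    HasGaussianDecay fun z => fderiv ℝ (fderiv ℝ (heatKernel t : E → ℝ)) z v w :=
  (hasGaussianDecay_fderiv_fderiv_heatKernel ht).mono ⟨‖v‖ * ‖w‖, fun _ =>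
    (ContinuousLinearMap.le_opNorm₂ _ v w).trans_eq (by ring)⟩

theorem continuous_fderiv_fderiv_heatKernel_apply (v w : E) :
    Continuous fun z => fderiv ℝ (fderiv ℝ (heatKernel t : E → ℝ)) z v w :=
  (((contDiff_heatKernel (k := 2)).fderiv_right le_rfl).continuous_fderiv
    one_ne_zero).clm_apply continuous_const |>.clm_apply continuous_const

theorem continuous_laplacian_heatKernel [FiniteDimensional ℝ E] (ht : 0 < t) :
    Continuous (Δ (heatKernel t : E → ℝ)) := by
  have h_cont : Continuous (heatKernel t : E → ℝ) := (contDiff_heatKernel (k := 0)).continuous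
  rw [funext (laplacian_heatKernel ht)]
  fun_prop

theorem abs_laplacian_heatKernel_le [FiniteDimensional ℝ E] {s : ℝ} (ht : 0 < t)
    (hs : s ∈ Set.Icc (t / 2) (2 * t)) (z : E) :
    |Δ (heatKernel s : E → ℝ) z| ≤ 2 ^ Module.finrank ℝ E *
      (1 / t ^ 2 + Module.finrank ℝ E / t) * ((1 + ‖z‖ ^ 2) * ‖heatKernel (2 * t) z‖) := by
  have hs_pos : 0 < s := (half_pos ht).trans_le hs.1
  have hs_double : t ≤ 2 * s := by linarith [hs.1]
  have hs_sq : t ^ 2 ≤ 4 * s ^ 2 := by nlinarith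
  have h_rate : |‖z‖ ^ 2 / (4 * s ^ 2) - Module.finrank ℝ E / (2 * s)| ≤
      (1 / t ^ 2 + Module.finrank ℝ E / t) * (1 + ‖z‖ ^ 2) := by
    calc _ ≤ ‖z‖ ^ 2 / (4 * s ^ 2) + Module.finrank ℝ E / (2 * s) := by
          refine (abs_sub _ _).trans_eq ?_
          rw [abs_of_nonneg (by positivity), abs_of_nonneg (by positivity)]
      _ ≤ ‖z‖ ^ 2 / t ^ 2 + Module.finrank ℝ E / t := by gcongr
      _ = (1 / t ^ 2 + Module.finrank ℝ E / t) * (1 + ‖z‖ ^ 2) -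
            (1 / t ^ 2 + Module.finrank ℝ E / t * ‖z‖ ^ 2) := by ring
      _ ≤ (1 / t ^ 2 + Module.finrank ℝ E / t) * (1 + ‖z‖ ^ 2) :=
          sub_le_self _ (by positivity)
  rw [laplacian_heatKernel hs_pos, abs_mul, abs_of_pos (heatKernel_pos hs_pos z),
    norm_heatKernel (by positivity)]
  calc _ ≤ (1 / t ^ 2 + Module.finrank ℝ E / t) * (1 + ‖z‖ ^ 2) *
        (2 ^ Module.finrank ℝ E * heatKernel (2 * t) z) := by
        gcongr
        · exact (heatKernel_pos hs_pos z).le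
        · exact heatKernel_le_two_pow_mul ht hs z
    _ = _ := by ring

variable [FiniteDimensional ℝ E] [MeasurableSpace E] [BorelSpace E]

theorem integral_heatKernel (ht : 0 < t) : ∫ z : E, heatKernel t z = 1 := by
  have h_exponent (z : E) : -‖z‖ ^ 2 / (4 * t) = -(4 * t)⁻¹ * ‖z‖ ^ 2 := by ring
  simp_rw [heatKernel, h_exponent]
  rw [integral_const_mul, GaussianFourier.integral_rexp_neg_mul_sq_norm (by positivity),
    div_inv_eq_mul, neg_div, rpow_neg (by positivity), show π * (4 * t) = 4 * π * t by ring]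
  exact inv_mul_cancel₀ (by positivity)

theorem integral_laplacian_heatKernel (ht : 0 < t) :
    ∫ z, Δ (heatKernel t : E → ℝ) z = 0 := by
  have h_int₁ := (hasGaussianDecay_fderiv_heatKernel (E := E) ht).integrable
    (contDiff_heatKernel.continuous_fderiv one_ne_zero)
  have h_int₂ (v : E) := (hasGaussianDecay_fderiv_fderiv_heatKernel_apply ht v v).integrable
    (continuous_fderiv_fderiv_heatKernel_apply v v)
  have h_gradient_one (z : E) : ∇ (fun _ : E => (1 : ℝ)) z = 0 := by simp [gradient]
  simpa [h_gradient_one] using integral_mul_laplacian_eq_neg (differentiable_const (1 : ℝ))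
    (contDiff_heatKernel (E := E) (t := t)) (by simp [h_gradient_one])
    (fun v => by simpa using h_int₁.apply_continuousLinearMap v) (fun v => by simpa using h_int₂ v)

end HeatKernelEstimates

theorem sq_integral_mul_le_integral_mul_integral {α : Type*} [MeasurableSpace α] {μ : Measure α}
    {a w : α → ℝ} (hw : ∀ y, 0 ≤ w y) (h₀ : Integrable w μ) (h₁ : Integrable (fun y => a y * w y) μ)
    (h₂ : Integrable (fun y => a y ^ 2 * w y) μ) :
    (∫ y, a y * w y ∂μ) ^ 2 ≤ (∫ y, w y ∂μ) * ∫ y, a y ^ 2 * w y ∂μ := by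
  have h₁' (c : ℝ) : Integrable (fun y => 2 * c * (a y * w y)) μ := h₁.const_mul (2 * c)
  have h_quadratic (c : ℝ) : 0 ≤ (∫ y, w y ∂μ) * (c * c) + (-2 * ∫ y, a y * w y ∂μ) * c +
      ∫ y, a y ^ 2 * w y ∂μ := by
    calc 0 ≤ ∫ y, (a y - c) ^ 2 * w y ∂μ :=
          integral_nonneg fun y => mul_nonneg (sq_nonneg _) (hw y)
      _ = ∫ y, (a y ^ 2 * w y - 2 * c * (a y * w y) + c ^ 2 * w y) ∂μ := by
          congr with y
          ring
      _ = _ := by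
          rw [integral_add (by exact h₂.sub (h₁' c)) (h₀.const_mul _), integral_sub h₂ (h₁' c),
            integral_const_mul, integral_const_mul]
          ring
  have h_discrim := discrim_le_zero h_quadratic
  rw [discrim] at h_discrim
  linarith

section HeatFlow

variable {E : Type*} [NormedAddCommGroup E] [InnerProductSpace ℝ E] [MeasurableSpace E]

/-- The solution at time `t` of the heat equation with initial datum the measure `μ`. -/
noncomputable def heatFlow (μ : Measure E) (t : ℝ) : E → ℝ :=
  mollify μ (heatKernel t)

variable [FiniteDimensional ℝ E] [BorelSpace E] {μ : Measure E} {t : ℝ}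

theorem integrable_heatKernel_sub [IsFiniteMeasure μ] (ht : 0 < t) (x : E) :
    Integrable (fun y => heatKernel t (x - y)) μ :=
  integrable_comp_sub_of_bounded (contDiff_heatKernel (k := 0)).continuous
    (hasGaussianDecay_heatKernel ht).bounded x

theorem contDiff_heatFlow [IsFiniteMeasure μ] (ht : 0 < t) : ContDiff ℝ 2 (heatFlow μ t) :=
  contDiff_two_mollify contDiff_heatKernel (hasGaussianDecay_heatKernel ht).bounded
    (hasGaussianDecay_fderiv_heatKernel ht).bounded
    (hasGaussianDecay_fderiv_fderiv_heatKernel ht).bounded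

theorem fderiv_heatFlow [IsFiniteMeasure μ] (ht : 0 < t) :
    fderiv ℝ (heatFlow μ t) = mollify μ (fderiv ℝ (heatKernel t)) :=
  fderiv_mollify contDiff_heatKernel (hasGaussianDecay_heatKernel ht).bounded
    (hasGaussianDecay_fderiv_heatKernel ht).bounded

theorem fderiv_fderiv_heatFlow_apply [IsFiniteMeasure μ] (ht : 0 < t) (x v w : E) :
    fderiv ℝ (fderiv ℝ (heatFlow μ t)) x v w =
      mollify μ (fun z => fderiv ℝ (fderiv ℝ (heatKernel t)) z v w) x :=
  fderiv_fderiv_mollify_apply contDiff_heatKernel (hasGaussianDecay_heatKernel ht).bounded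
    (hasGaussianDecay_fderiv_heatKernel ht).bounded
    (hasGaussianDecay_fderiv_fderiv_heatKernel ht).bounded x v w

theorem laplacian_heatFlow [IsFiniteMeasure μ] (ht : 0 < t) (x : E) :
    Δ (heatFlow μ t) x = mollify μ (Δ (heatKernel t : E → ℝ)) x :=
  laplacian_mollify contDiff_heatKernel (hasGaussianDecay_heatKernel ht).bounded
    (hasGaussianDecay_fderiv_heatKernel ht).bounded
    (hasGaussianDecay_fderiv_fderiv_heatKernel ht).bounded x

theorem hasDerivAt_heatFlow [IsFiniteMeasure μ] (ht : 0 < t) (x : E) :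
    HasDerivAt (fun s => heatFlow μ s x) (Δ (heatFlow μ t) x) t := by
  obtain ⟨C, hC⟩ := (hasGaussianDecay_heatKernel (E := E)
    (mul_pos two_pos ht)).one_add_norm_sq_mul_norm.bounded
  have h_nhds : Set.Icc (t / 2) (2 * t) ∈ nhds t := Icc_mem_nhds (by linarith) (by linarith)
  have hs_pos {s : ℝ} (hs : s ∈ Set.Icc (t / 2) (2 * t)) : 0 < s := (half_pos ht).trans_le hs.1
  rw [laplacian_heatFlow ht]
  refine (hasDerivAt_integral_of_dominated_loc_of_deriv_le h_nhds ?_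
    (integrable_heatKernel_sub ht x) ?_ (.of_forall fun y s hs => ?_) (integrable_const
      (2 ^ Module.finrank ℝ E * (1 / t ^ 2 + Module.finrank ℝ E / t) * C))
    (.of_forall fun y s hs => hasDerivAt_heatKernel (hs_pos hs) (x - y))).2
  · filter_upwards [h_nhds] with s hs
    exact (integrable_heatKernel_sub (hs_pos hs) x).aestronglyMeasurable
  · exact ((continuous_laplacian_heatKernel ht).comp
      (continuous_const.sub continuous_id)).aestronglyMeasurable
  · refine (abs_laplacian_heatKernel_le ht hs (x - y)).trans ?_
    gcongr
    exact (le_abs_self _).trans (hC (x - y))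

end HeatFlow

section LiYau

variable {E : Type*} [NormedAddCommGroup E] [InnerProductSpace ℝ E] [FiniteDimensional ℝ E]

theorem hasGaussianDecay_laplacian_heatKernel {t : ℝ} (ht : 0 < t) :
    HasGaussianDecay (Δ (heatKernel t : E → ℝ)) := by
  refine (hasGaussianDecay_heatKernel (mul_pos two_pos ht)).one_add_norm_sq_mul_norm.mono
    ⟨2 ^ Module.finrank ℝ E * (1 / t ^ 2 + Module.finrank ℝ E / t), fun z => ?_⟩
  rw [norm_of_nonneg (by positivity : 0 ≤ (1 + ‖z‖ ^ 2) * ‖heatKernel (2 * t) z‖)]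
  exact abs_laplacian_heatKernel_le ht ⟨by linarith, by linarith⟩ z

variable [MeasurableSpace E] [BorelSpace E] {μ : Measure E} [IsFiniteMeasure μ] {t : ℝ}

theorem heatFlow_pos [NeZero μ] (ht : 0 < t) (x : E) : 0 < heatFlow μ t x := by
  have h_support : Function.support (fun y => heatKernel t (x - y)) = Set.univ :=
    Set.eq_univ_of_forall fun y => (heatKernel_pos ht (x - y)).ne'
  rw [heatFlow, mollify, integral_pos_iff_support_of_nonneg
    (fun y => (heatKernel_pos ht (x - y)).le) (integrable_heatKernel_sub ht x), h_support]
  exact Measure.measure_univ_pos.2 (NeZero.ne μ)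

theorem laplacian_heatFlow_add (ht : 0 < t) (x : E) :
    Δ (heatFlow μ t) x + Module.finrank ℝ E / (2 * t) * heatFlow μ t x =
      mollify μ (fun z => (‖z‖ / (2 * t)) ^ 2 * heatKernel t z) x := by
  have h_int := integrable_comp_sub_of_bounded (μ := μ) (continuous_laplacian_heatKernel ht)
    (hasGaussianDecay_laplacian_heatKernel ht).bounded x
  rw [laplacian_heatFlow ht, heatFlow, mollify, mollify, mollify, ← integral_const_mul,
    ← integral_add h_int ((integrable_heatKernel_sub ht x).const_mul _)]
  congr with y
  rw [laplacian_heatKernel ht]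
  ring

/- This is Cauchy–Schwarz with weight `heatKernel t (x - y)`, because the logarithmic gradient of
the heat kernel is `-z / (2t)`. -/
theorem norm_gradient_heatFlow_sq_le (ht : 0 < t) (x : E) :
    ‖∇ (heatFlow μ t) x‖ ^ 2 ≤ heatFlow μ t x *
      (Δ (heatFlow μ t) x + Module.finrank ℝ E / (2 * t) * heatFlow μ t x) := by
  have h_weight₀ := integrable_heatKernel_sub (μ := μ) ht x
  have h_weight₁ : Integrable (fun y => ‖x - y‖ / (2 * t) * heatKernel t (x - y)) μ := by
    simpa only [norm_fderiv_heatKernel ht] using (integrable_comp_sub_of_bounded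
      (contDiff_heatKernel.continuous_fderiv one_ne_zero)
      (hasGaussianDecay_fderiv_heatKernel ht).bounded x).norm
  have h_weight₂ : Integrable (fun y => (‖x - y‖ / (2 * t)) ^ 2 * heatKernel t (x - y)) μ := by
    refine ((integrable_comp_sub_of_bounded (continuous_laplacian_heatKernel ht)
      (hasGaussianDecay_laplacian_heatKernel ht).bounded x).add
        (h_weight₀.const_mul (Module.finrank ℝ E / (2 * t)))).congr (.of_forall fun y => ?_)
    rw [Pi.add_apply, laplacian_heatKernel ht]
    ring
  have h_norm : ‖∇ (heatFlow μ t) x‖ ≤ ∫ y, ‖x - y‖ / (2 * t) * heatKernel t (x - y) ∂μ := by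
    simpa only [norm_gradient, fderiv_heatFlow ht, mollify, norm_fderiv_heatKernel ht] using
      norm_mollify_le μ (fderiv ℝ (heatKernel t)) x
  calc _ ≤ (∫ y, ‖x - y‖ / (2 * t) * heatKernel t (x - y) ∂μ) ^ 2 := by gcongr
    _ ≤ _ := sq_integral_mul_le_integral_mul_integral (fun y => (heatKernel_pos ht (x - y)).le)
        h_weight₀ h_weight₁ h_weight₂
    _ = _ := by rw [laplacian_heatFlow_add ht, heatFlow, mollify, mollify]

theorem neg_finrank_div_le_laplacian_log_heatFlow [NeZero μ] (ht : 0 < t) (x : E) :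
    -(Module.finrank ℝ E / (2 * t)) ≤ Δ (fun y => log (heatFlow μ t y)) x := by
  have hu := heatFlow_pos (μ := μ) ht x
  have h_gradient : ‖∇ (heatFlow μ t) x‖ ^ 2 / heatFlow μ t x ^ 2 ≤
      Δ (heatFlow μ t) x / heatFlow μ t x + Module.finrank ℝ E / (2 * t) := by
    rw [div_le_iff₀ (by positivity)]
    refine (norm_gradient_heatFlow_sq_le ht x).trans_eq ?_
    field_simp
  rw [laplacian_log (contDiff_heatFlow ht) fun y => (heatFlow_pos ht y).ne']
  linarith

end LiYau

section LogarithmicBounds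

variable {E : Type*} [NormedAddCommGroup E] [InnerProductSpace ℝ E] [FiniteDimensional ℝ E]
  [MeasurableSpace E] [BorelSpace E] {μ : Measure E} [IsProbabilityMeasure μ] {t : ℝ}

theorem heatFlow_le (ht : 0 < t) (x : E) :
    heatFlow μ t x ≤ (4 * π * t) ^ (-(Module.finrank ℝ E : ℝ) / 2) := by
  calc heatFlow μ t x ≤ ∫ _, (4 * π * t) ^ (-(Module.finrank ℝ E : ℝ) / 2) ∂μ :=
        integral_mono (integrable_heatKernel_sub ht x) (integrable_const _)
          fun y => heatKernel_le ht (x - y)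
    _ = _ := by simp

/- Jensen's inequality for `exp`. -/
theorem le_heatFlow (hμ : Integrable (fun y => ‖y‖ ^ 2) μ) (ht : 0 < t) (x : E) :
    (4 * π * t) ^ (-(Module.finrank ℝ E : ℝ) / 2) *
      exp (-(‖x‖ ^ 2 + ∫ y, ‖y‖ ^ 2 ∂μ) / (2 * t)) ≤ heatFlow μ t x := by
  have h_quad : Integrable (fun y => -(‖x‖ ^ 2 + ‖y‖ ^ 2) / (2 * t)) μ :=
    (((integrable_const _).add hμ).neg).div_const _
  have h_exp_le (y : E) : exp (-(‖x‖ ^ 2 + ‖y‖ ^ 2) / (2 * t)) ≤ exp (-‖x - y‖ ^ 2 / (4 * t)) := by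
    have h_parallelogram := parallelogram_law_with_norm ℝ x y
    rw [exp_le_exp, div_le_div_iff₀ (by positivity) (by positivity)]
    nlinarith [sq_nonneg ‖x + y‖]
  have h_exp : Integrable (fun y => exp (-(‖x‖ ^ 2 + ‖y‖ ^ 2) / (2 * t))) μ := by
    refine .of_bound (by fun_prop) 1 (.of_forall fun y => ?_)
    rw [norm_of_nonneg (exp_pos _).le, exp_le_one_iff]
    exact div_nonpos_of_nonpos_of_nonneg (by nlinarith [sq_nonneg ‖x‖]) (by positivity)
  have h_jensen := convexOn_exp.map_integral_le continuous_exp.continuousOn isClosed_univ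
    (.of_forall fun _ => Set.mem_univ _) h_quad h_exp
  have h_mean : ∫ y, -(‖x‖ ^ 2 + ‖y‖ ^ 2) / (2 * t) ∂μ =
      -(‖x‖ ^ 2 + ∫ y, ‖y‖ ^ 2 ∂μ) / (2 * t) := by
    rw [integral_div, integral_neg, integral_add (integrable_const _) hμ]
    simp
  rw [h_mean] at h_jensen
  calc _ ≤ (4 * π * t) ^ (-(Module.finrank ℝ E : ℝ) / 2) *
        ∫ y, exp (-(‖x‖ ^ 2 + ‖y‖ ^ 2) / (2 * t)) ∂μ := by gcongr
    _ = ∫ y, (4 * π * t) ^ (-(Module.finrank ℝ E : ℝ) / 2) *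
        exp (-(‖x‖ ^ 2 + ‖y‖ ^ 2) / (2 * t)) ∂μ := (integral_const_mul _ _).symm
    _ ≤ heatFlow μ t x := integral_mono (h_exp.const_mul _) (integrable_heatKernel_sub ht x)
        fun y => mul_le_mul_of_nonneg_left (h_exp_le y) (by positivity)

theorem abs_log_heatFlow_le (hμ : Integrable (fun y => ‖y‖ ^ 2) μ) (ht : 0 < t) (x : E) :
    |log (heatFlow μ t x)| ≤ Module.finrank ℝ E / 2 * |log (4 * π * t)| +
      (‖x‖ ^ 2 + ∫ y, ‖y‖ ^ 2 ∂μ) / (2 * t) := by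
  have h_const : 0 < (4 * π * t) ^ (-(Module.finrank ℝ E : ℝ) / 2) := by positivity
  have h_upper := log_le_log (heatFlow_pos ht x) (heatFlow_le (μ := μ) ht x)
  have h_lower := log_le_log (by positivity) (le_heatFlow hμ ht x)
  have h_moment : 0 ≤ (‖x‖ ^ 2 + ∫ y, ‖y‖ ^ 2 ∂μ) / (2 * t) := by
    have h_nonneg : 0 ≤ ∫ y, ‖y‖ ^ 2 ∂μ := integral_nonneg fun y => sq_nonneg ‖y‖
    positivity
  rw [log_mul h_const.ne' (exp_pos _).ne', log_exp, neg_div _ (‖x‖ ^ 2 + _)] at h_lower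
  rw [log_rpow (by positivity)] at h_upper h_lower
  have h_coeff : |-(Module.finrank ℝ E : ℝ) / 2 * log (4 * π * t)| =
      Module.finrank ℝ E / 2 * |log (4 * π * t)| := by
    rw [abs_mul, neg_div, abs_neg, abs_of_nonneg (by positivity)]
  rw [← h_coeff, abs_le]
  constructor
  · linarith [neg_abs_le (-(Module.finrank ℝ E : ℝ) / 2 * log (4 * π * t))]
  · linarith [le_abs_self (-(Module.finrank ℝ E : ℝ) / 2 * log (4 * π * t))]

theorem exists_abs_log_heatFlow_add_one_le (hμ : Integrable (fun y => ‖y‖ ^ 2) μ) (ht : 0 < t) :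
    ∃ C, ∀ s ∈ Set.Icc (t / 2) (2 * t), ∀ x : E,
      |log (heatFlow μ s x) + 1| ≤ C * (1 + ‖x‖ ^ 2) := by
  have h_cont : ContinuousOn (fun s : ℝ => |log (4 * π * s)|) (Set.Icc (t / 2) (2 * t)) :=
    ((continuousOn_const.mul continuousOn_id).log fun s hs =>
      mul_ne_zero (by positivity) ((half_pos ht).trans_le hs.1).ne').abs
  obtain ⟨B, hB⟩ := isCompact_Icc.bddAbove_image h_cont
  have h_moment : 0 ≤ ∫ y, ‖y‖ ^ 2 ∂μ := integral_nonneg fun y => sq_nonneg ‖y‖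
  refine ⟨Module.finrank ℝ E / 2 * |B| + (1 + ∫ y, ‖y‖ ^ 2 ∂μ) / t + 1, fun s hs x => ?_⟩
  have hs_pos : 0 < s := (half_pos ht).trans_le hs.1
  have h_log : |log (4 * π * s)| ≤ |B| := (hB ⟨s, hs, rfl⟩).trans (le_abs_self B)
  calc |log (heatFlow μ s x) + 1| ≤ |log (heatFlow μ s x)| + 1 :=
        (abs_add_le _ _).trans_eq (by rw [abs_one])
    _ ≤ Module.finrank ℝ E / 2 * |log (4 * π * s)| +
          (‖x‖ ^ 2 + ∫ y, ‖y‖ ^ 2 ∂μ) / (2 * s) + 1 := by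
        gcongr
        exact abs_log_heatFlow_le hμ hs_pos x
    _ ≤ Module.finrank ℝ E / 2 * |B| + (‖x‖ ^ 2 + ∫ y, ‖y‖ ^ 2 ∂μ) / t + 1 := by
        gcongr
        linarith [hs.1]
    _ = (Module.finrank ℝ E / 2 * |B| + (1 + ∫ y, ‖y‖ ^ 2 ∂μ) / t + 1) * (1 + ‖x‖ ^ 2) -
          (1 / t + ‖x‖ ^ 2 * (Module.finrank ℝ E / 2 * |B| + (∫ y, ‖y‖ ^ 2 ∂μ) / t + 1)) := by ring
    _ ≤ _ := sub_le_self _ (by positivity)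

end LogarithmicBounds

section HeatFlowIntegrability

variable {E : Type*} [NormedAddCommGroup E] [InnerProductSpace ℝ E] [FiniteDimensional ℝ E]
  [MeasurableSpace E] [BorelSpace E]

theorem HasGaussianDecay.integrable_smul_mollify {F : Type*} [NormedAddCommGroup F]
    [NormedSpace ℝ F] {g : E → F} (hg : HasGaussianDecay g) (hg_cont : Continuous g)
    {μ : Measure E} [IsFiniteMeasure μ] (hμ : Integrable (fun y => ‖y‖ ^ 2) μ) {φ : E → ℝ}
    (hφ : Continuous φ) (hC : ∃ C, ∀ x, |φ x| ≤ C * (1 + ‖x‖ ^ 2)) :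
    Integrable fun x => φ x • mollify μ g x :=
  let ⟨_, hC⟩ := hC
  _root_.integrable_smul_mollify hμ hg_cont
    (hg.one_add_norm_sq_mul_norm.integrable (by fun_prop)) hφ hC

variable {μ : Measure E} [IsFiniteMeasure μ] (hμ : Integrable (fun y => ‖y‖ ^ 2) μ)
  {φ : E → ℝ} (hφ : Continuous φ) (hC : ∃ C, ∀ x, |φ x| ≤ C * (1 + ‖x‖ ^ 2)) {t : ℝ} (ht : 0 < t)

include hμ hφ hC ht

theorem integrable_mul_heatFlow : Integrable fun x => φ x * heatFlow μ t x :=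
  (hasGaussianDecay_heatKernel ht).integrable_smul_mollify
    (contDiff_heatKernel (k := 0)).continuous hμ hφ hC

theorem integrable_mul_laplacian_heatFlow : Integrable fun x => φ x * Δ (heatFlow μ t) x := by
  simp only [laplacian_heatFlow ht]
  exact (hasGaussianDecay_laplacian_heatKernel ht).integrable_smul_mollify
    (continuous_laplacian_heatKernel ht) hμ hφ hC

theorem integrable_mul_fderiv_heatFlow (v : E) :
    Integrable fun x => φ x * fderiv ℝ (heatFlow μ t) x v := by
  rw [fderiv_heatFlow ht]
  exact ((hasGaussianDecay_fderiv_heatKernel ht).integrable_smul_mollify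
    (contDiff_heatKernel.continuous_fderiv one_ne_zero) hμ hφ hC).apply_continuousLinearMap v

theorem integrable_mul_fderiv_fderiv_heatFlow (v w : E) :
    Integrable fun x => φ x * fderiv ℝ (fderiv ℝ (heatFlow μ t)) x v w := by
  simp only [fderiv_fderiv_heatFlow_apply ht]
  exact (hasGaussianDecay_fderiv_fderiv_heatKernel_apply ht v w).integrable_smul_mollify
    (continuous_fderiv_fderiv_heatKernel_apply v w) hμ hφ hC

end HeatFlowIntegrability

section DeBruijn

variable {E : Type*} [NormedAddCommGroup E] [InnerProductSpace ℝ E] [FiniteDimensional ℝ E]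
  [MeasurableSpace E] [BorelSpace E]

/-- The Fisher information `∫ ‖∇ g‖² / g` of a positive density `g`. -/
noncomputable def fisherInformation (g : E → ℝ) : ℝ :=
  ∫ x, ‖∇ g x‖ ^ 2 / g x

variable {μ : Measure E} {t : ℝ}

theorem integrable_heatKernel (ht : 0 < t) : Integrable (heatKernel t : E → ℝ) :=
  (hasGaussianDecay_heatKernel ht).integrable (contDiff_heatKernel (k := 0)).continuous

theorem integrable_laplacian_heatKernel (ht : 0 < t) :
    Integrable (Δ (heatKernel t : E → ℝ)) :=
  (hasGaussianDecay_laplacian_heatKernel ht).integrable (continuous_laplacian_heatKernel ht)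

theorem integrable_heatFlow [IsFiniteMeasure μ] (ht : 0 < t) : Integrable (heatFlow μ t) :=
  integrable_mollify (integrable_heatKernel ht)

theorem integral_heatFlow [IsFiniteMeasure μ] (ht : 0 < t) :
    ∫ x, heatFlow μ t x = μ.real Set.univ := by
  rw [heatFlow, integral_mollify (integrable_heatKernel ht), integral_heatKernel ht, mul_one]

theorem integrable_laplacian_heatFlow [IsFiniteMeasure μ] (ht : 0 < t) :
    Integrable (Δ (heatFlow μ t)) := by
  rw [funext (laplacian_heatFlow ht)]
  exact integrable_mollify (integrable_laplacian_heatKernel ht)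

theorem integral_laplacian_heatFlow [IsFiniteMeasure μ] (ht : 0 < t) :
    ∫ x, Δ (heatFlow μ t) x = 0 := by
  simp only [laplacian_heatFlow ht]
  rw [integral_mollify (integrable_laplacian_heatKernel ht), integral_laplacian_heatKernel ht,
    mul_zero]

theorem integrable_norm_gradient_heatFlow_sq_div [IsFiniteMeasure μ] [NeZero μ] (ht : 0 < t) :
    Integrable fun x => ‖∇ (heatFlow μ t) x‖ ^ 2 / heatFlow μ t x := by
  have h_cont := (contDiff_heatFlow (μ := μ) ht).continuous
  have h_cont₁ := (contDiff_heatFlow (μ := μ) ht).continuous_fderiv two_ne_zero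
  refine ((integrable_laplacian_heatFlow (μ := μ) ht).add ((integrable_heatFlow (μ := μ)
    ht).const_mul (Module.finrank ℝ E / (2 * t)))).mono' ?_ (.of_forall fun x => ?_)
  · simp only [norm_gradient]
    exact ((h_cont₁.norm.pow 2).div h_cont fun x =>
      (heatFlow_pos (μ := μ) ht x).ne').aestronglyMeasurable
  · have hu := heatFlow_pos (μ := μ) ht x
    rw [norm_of_nonneg (by positivity), div_le_iff₀ hu, mul_comm]
    exact norm_gradient_heatFlow_sq_le ht x

theorem integral_laplacian_log_add_mul_heatFlow [IsFiniteMeasure μ] [NeZero μ] (ht : 0 < t)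
    (c : ℝ) :
    ∫ x, (Δ (fun y => log (heatFlow μ t y)) x + c) * heatFlow μ t x =
      c * μ.real Set.univ - fisherInformation (heatFlow μ t) := by
  have h_integrand (x : E) : (Δ (fun y => log (heatFlow μ t y)) x + c) * heatFlow μ t x =
      Δ (heatFlow μ t) x - ‖∇ (heatFlow μ t) x‖ ^ 2 / heatFlow μ t x + c * heatFlow μ t x := by
    have hu := (heatFlow_pos (μ := μ) ht x).ne'
    rw [laplacian_log (contDiff_heatFlow (μ := μ) ht) fun y => (heatFlow_pos ht y).ne']
    field_simp
  have h_laplacian := integrable_laplacian_heatFlow (μ := μ) ht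
  have h_fisher := integrable_norm_gradient_heatFlow_sq_div (μ := μ) ht
  simp only [h_integrand]
  rw [integral_add (by exact h_laplacian.sub h_fisher) ((integrable_heatFlow ht).const_mul c),
    integral_sub h_laplacian h_fisher, integral_const_mul, integral_laplacian_heatFlow ht,
    integral_heatFlow ht, fisherInformation]
  ring

theorem abs_laplacian_heatFlow_le [IsFiniteMeasure μ] {s : ℝ} (ht : 0 < t)
    (hs : s ∈ Set.Icc (t / 2) (2 * t)) (x : E) :
    |Δ (heatFlow μ s) x| ≤ 2 ^ Module.finrank ℝ E * (1 / t ^ 2 + Module.finrank ℝ E / t) *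
      mollify μ (fun z => (1 + ‖z‖ ^ 2) * ‖heatKernel (2 * t) z‖) x := by
  have hs_pos : 0 < s := (half_pos ht).trans_le hs.1
  have h_cont : Continuous (heatKernel (2 * t) : E → ℝ) :=
    (contDiff_heatKernel (k := 0)).continuous
  rw [laplacian_heatFlow hs_pos]
  refine (norm_mollify_le μ (Δ (heatKernel s : E → ℝ)) x).trans ?_
  rw [mollify, mollify, ← integral_const_mul]
  refine integral_mono (integrable_comp_sub_of_bounded (continuous_laplacian_heatKernel hs_pos)
    (hasGaussianDecay_laplacian_heatKernel hs_pos).bounded x).norm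
    ((integrable_comp_sub_of_bounded (by fun_prop) (hasGaussianDecay_heatKernel
      (mul_pos two_pos ht)).one_add_norm_sq_mul_norm.bounded x).const_mul _)
    fun y => abs_laplacian_heatKernel_le ht hs (x - y)

theorem continuous_log_heatFlow_add_one [IsFiniteMeasure μ] [NeZero μ] (ht : 0 < t) :
    Continuous fun x => log (heatFlow μ t x) + 1 :=
  ((contDiff_heatFlow ht).continuous.log fun x => (heatFlow_pos ht x).ne').add continuous_const

variable [IsProbabilityMeasure μ]

theorem integral_log_heatFlow_add_one_mul_laplacian (hμ : Integrable (fun y => ‖y‖ ^ 2) μ)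
    (ht : 0 < t) :
    ∫ x, (log (heatFlow μ t x) + 1) * Δ (heatFlow μ t) x = -fisherInformation (heatFlow μ t) := by
  have hu := contDiff_heatFlow (μ := μ) ht
  have hu_pos (x : E) := heatFlow_pos (μ := μ) ht x
  have h_diff : Differentiable ℝ fun x => log (heatFlow μ t x) + 1 :=
    ((hu.differentiable two_ne_zero).log fun x => (hu_pos x).ne').add_const 1
  have h_gradient (x : E) : ∇ (fun y => log (heatFlow μ t y) + 1) x =
      (heatFlow μ t x)⁻¹ • ∇ (heatFlow μ t) x := by
    rw [← gradient_log (hu.differentiable two_ne_zero x) (hu_pos x).ne', gradient, gradient,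
      fderiv_add_const]
  have h_growth : ∃ C, ∀ x, |log (heatFlow μ t x) + 1| ≤ C * (1 + ‖x‖ ^ 2) :=
    let ⟨C, hC⟩ := exists_abs_log_heatFlow_add_one_le hμ ht
    ⟨C, hC t ⟨by linarith, by linarith⟩⟩
  have h_cont := h_diff.continuous
  rw [integral_mul_laplacian_eq_neg h_diff hu ?_
    (integrable_mul_fderiv_heatFlow hμ h_cont h_growth ht)
    fun v => integrable_mul_fderiv_fderiv_heatFlow hμ h_cont h_growth ht v v, fisherInformation]
  · congr with x
    rw [h_gradient, real_inner_smul_left, real_inner_self_eq_norm_sq]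
    ring
  · refine (integrable_norm_gradient_heatFlow_sq_div (μ := μ) ht).congr (.of_forall fun x => ?_)
    simp only [h_gradient, norm_smul, norm_inv, norm_of_nonneg (hu_pos x).le]
    ring

theorem integrable_heatFlow_mul_log (hμ : Integrable (fun y => ‖y‖ ^ 2) μ) (ht : 0 < t) :
    Integrable fun x => heatFlow μ t x * log (heatFlow μ t x) := by
  obtain ⟨C, hC⟩ := exists_abs_log_heatFlow_add_one_le hμ ht
  refine ((integrable_mul_heatFlow hμ (continuous_log_heatFlow_add_one (μ := μ) ht)
    ⟨C, hC t ⟨by linarith, by linarith⟩⟩ ht).sub (integrable_heatFlow (μ := μ) ht)).congr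
    (.of_forall fun x => ?_)
  rw [Pi.sub_apply]
  ring

/- De Bruijn's identity. -/
theorem hasDerivAt_integral_heatFlow_mul_log (hμ : Integrable (fun y => ‖y‖ ^ 2) μ) (ht : 0 < t) :
    HasDerivAt (fun s => ∫ x, heatFlow μ s x * log (heatFlow μ s x))
      (-fisherInformation (heatFlow μ t)) t := by
  obtain ⟨C, hC⟩ := exists_abs_log_heatFlow_add_one_le hμ ht
  have h_nhds : Set.Icc (t / 2) (2 * t) ∈ nhds t := Icc_mem_nhds (by linarith) (by linarith)
  have hs_pos {s : ℝ} (hs : s ∈ Set.Icc (t / 2) (2 * t)) : 0 < s := (half_pos ht).trans_le hs.1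
  have h_kernel : Continuous (heatKernel (2 * t) : E → ℝ) :=
    (contDiff_heatKernel (k := 0)).continuous
  have h_bound : Integrable fun x => C * (1 + ‖x‖ ^ 2) *
      mollify μ (fun z => (1 + ‖z‖ ^ 2) * ‖heatKernel (2 * t) z‖) x := by
    refine (hasGaussianDecay_heatKernel (mul_pos two_pos
      ht)).one_add_norm_sq_mul_norm.integrable_smul_mollify (by fun_prop) hμ (by fun_prop)
      ⟨|C|, fun x => ?_⟩
    rw [abs_mul, abs_of_nonneg (by positivity : 0 ≤ 1 + ‖x‖ ^ 2)]
  rw [← integral_log_heatFlow_add_one_mul_laplacian hμ ht]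
  refine (hasDerivAt_integral_of_dominated_loc_of_deriv_le
    (F' := fun s x => (log (heatFlow μ s x) + 1) * Δ (heatFlow μ s) x) h_nhds ?_
    (integrable_heatFlow_mul_log hμ ht) (integrable_mul_laplacian_heatFlow hμ
      (continuous_log_heatFlow_add_one ht) ⟨C, hC t (mem_of_mem_nhds h_nhds)⟩ ht).1
    (.of_forall fun x s hs => ?_) (h_bound.const_mul
      (2 ^ Module.finrank ℝ E * (1 / t ^ 2 + Module.finrank ℝ E / t)))
    (.of_forall fun x s hs => (hasDerivAt_mul_log (heatFlow_pos (hs_pos hs) x).ne').comp s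
      (hasDerivAt_heatFlow (hs_pos hs) x))).2
  · filter_upwards [h_nhds] with s hs
    exact (integrable_heatFlow_mul_log hμ (hs_pos hs)).1
  · rw [norm_mul]
    exact (mul_le_mul (hC s hs x) (abs_laplacian_heatFlow_le ht hs x) (abs_nonneg _)
      ((abs_nonneg _).trans (hC s hs x))).trans_eq (mul_left_comm _ _ _)

end DeBruijn

section RenormalizedEntropy

variable {E : Type*} [NormedAddCommGroup E] [InnerProductSpace ℝ E] [FiniteDimensional ℝ E]
  [MeasurableSpace E] [BorelSpace E] {μ : Measure E} {t : ℝ}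

theorem integral_laplacian_log_add_mul_heatFlow_nonneg [IsFiniteMeasure μ] [NeZero μ]
    (ht : 0 < t) :
    0 ≤ ∫ x, (Δ (fun y => log (heatFlow μ t y)) x + Module.finrank ℝ E / (2 * t)) *
      heatFlow μ t x :=
  integral_nonneg fun x => mul_nonneg
    (by linarith [neg_finrank_div_le_laplacian_log_heatFlow (μ := μ) ht x]) (heatFlow_pos ht x).le

/-- The entropy `-∫ u log u` of the heat flow `u` of `μ` at time `t`, minus the entropy
`(n / 2) log (4πet)` of the heat kernel on the `n`-dimensional space `E`. -/
noncomputable def renormalizedEntropy (μ : Measure E) (t : ℝ) : ℝ :=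
  -(∫ x, heatFlow μ t x * log (heatFlow μ t x)) -
    Module.finrank ℝ E / 2 * log (4 * π * exp 1 * t)

theorem hasDerivAt_renormalizedEntropy [IsProbabilityMeasure μ]
    (hμ : Integrable (fun y => ‖y‖ ^ 2) μ) (ht : 0 < t) :
    HasDerivAt (renormalizedEntropy μ)
      (-∫ x, (Δ (fun y => log (heatFlow μ t y)) x + Module.finrank ℝ E / (2 * t)) *
        heatFlow μ t x) t := by
  have h_gaussian : HasDerivAt (fun s => Module.finrank ℝ E / 2 * log (4 * π * exp 1 * s))
      (Module.finrank ℝ E / (2 * t)) t := by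
    convert! (((hasDerivAt_id t).const_mul (4 * π * exp 1)).log (by positivity)).const_mul
      (Module.finrank ℝ E / 2 : ℝ) using 1
    simp only [id_eq]
    field_simp
  convert! (hasDerivAt_integral_heatFlow_mul_log hμ ht).neg.sub h_gaussian using 1
  rw [integral_laplacian_log_add_mul_heatFlow ht, probReal_univ]
  ring

theorem antitoneOn_renormalizedEntropy [IsProbabilityMeasure μ]
    (hμ : Integrable (fun y => ‖y‖ ^ 2) μ) :
    AntitoneOn (renormalizedEntropy μ) (Set.Ioi 0) := by
  have h_deriv {t : ℝ} (ht : 0 < t) := hasDerivAt_renormalizedEntropy hμ ht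
  refine antitoneOn_of_deriv_nonpos (convex_Ioi 0)
    (fun t ht => (h_deriv ht).continuousAt.continuousWithinAt) ?_ ?_ <;> rw [interior_Ioi]
  · exact fun t ht => (h_deriv ht).differentiableAt.differentiableWithinAt
  · intro t ht
    rw [(h_deriv ht).deriv]
    exact neg_nonpos.2 (integral_laplacian_log_add_mul_heatFlow_nonneg ht)

end RenormalizedEntropy

section EuclideanSpace

theorem isProbabilityMeasure_withDensity_ofReal {α : Type*} [MeasurableSpace α] {ν : Measure α}
    {f : α → ℝ} (hf_nonneg : ∀ x, 0 ≤ f x) (hf_int : ∫ x, f x ∂ν = 1) :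
    IsProbabilityMeasure (ν.withDensity fun x => ENNReal.ofReal (f x)) := by
  have hf : Integrable f ν := .of_integral_ne_zero (by simp [hf_int])
  constructor
  rw [withDensity_apply _ .univ, setLIntegral_univ,
    ← ofReal_integral_eq_lintegral_ofReal hf (.of_forall hf_nonneg), hf_int, ENNReal.ofReal_one]

theorem integrable_withDensity_ofReal {α : Type*} [MeasurableSpace α] {ν : Measure α}
    {f g : α → ℝ} (hf : AEMeasurable f ν) (hf_nonneg : ∀ x, 0 ≤ f x)
    (hg : Integrable (fun x => g x * f x) ν) :
    Integrable g (ν.withDensity fun x => ENNReal.ofReal (f x)) := by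
  rw [integrable_withDensity_iff_integrable_smul₀' hf.ennreal_ofReal (by simp)]
  simpa only [ENNReal.toReal_ofReal (hf_nonneg _), smul_eq_mul, mul_comm] using hg

variable {n : ℕ}

theorem laplacian_eq_innerProductSpace_laplacian (g : EuclideanSpace ℝ (Fin n) → ℝ) :
    laplacian n g = Δ g := by
  rw [InnerProductSpace.laplacian_eq_iteratedFDeriv_orthonormalBasis g
    (EuclideanSpace.basisFun (Fin n) ℝ)]
  ext x
  simp only [laplacian, hessianMatrix, EuclideanSpace.basisFun_apply]

theorem heatSol_eq_heatFlow_withDensity {f : EuclideanSpace ℝ (Fin n) → ℝ}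
    (hf : AEMeasurable f) (hf_nonneg : ∀ x, 0 ≤ f x) (t : ℝ) :
    heatSol n f t = heatFlow (volume.withDensity fun x => ENNReal.ofReal (f x)) t := by
  ext x
  rw [heatFlow, mollify, integral_withDensity_eq_integral_toReal_smul₀
    hf.ennreal_ofReal (by simp), heatSol]
  congr with y
  rw [heatKernel, finrank_euclideanSpace_fin, ENNReal.toReal_ofReal (hf_nonneg y), smul_eq_mul,
    mul_comm]

theorem shannonEntropy_sub_eq_renormalizedEntropy {f : EuclideanSpace ℝ (Fin n) → ℝ}
    (hf : AEMeasurable f) (hf_nonneg : ∀ x, 0 ≤ f x) (t : ℝ) :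
    shannonEntropy n f t - (n : ℝ) / 2 * log (4 * π * exp 1 * t) =
      renormalizedEntropy (volume.withDensity fun x => ENNReal.ofReal (f x)) t := by
  rw [shannonEntropy, heatSol_eq_heatFlow_withDensity hf hf_nonneg, renormalizedEntropy,
    finrank_euclideanSpace_fin]

end EuclideanSpace

theorem renormalized_entropy_nonincreasing_general (n : ℕ) (f : EuclideanSpace ℝ (Fin n) → ℝ)
    (hf_nonneg : ∀ x, 0 ≤ f x) (hf_int : ∫ x, f x = 1)
    (hf_moment : Integrable fun x => ‖x‖ ^ 2 * f x) :
    (∀ t : ℝ, 0 < t →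
      HasDerivAt (fun s => shannonEntropy n f s
          - ((n : ℝ) / 2) * Real.log (4 * π * Real.exp 1 * s))
        (-∫ x, (laplacian n (fun y => Real.log (heatSol n f t y)) x + (n : ℝ) / (2 * t))
            * heatSol n f t x) t ∧
      (-∫ x, (laplacian n (fun y => Real.log (heatSol n f t y)) x + (n : ℝ) / (2 * t))
            * heatSol n f t x) ≤ 0) ∧
    (∀ s t : ℝ, 0 < s → s ≤ t →
      shannonEntropy n f t - ((n : ℝ) / 2) * Real.log (4 * π * Real.exp 1 * t) ≤
        shannonEntropy n f s - ((n : ℝ) / 2) * Real.log (4 * π * Real.exp 1 * s)) := by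
  have hf : AEMeasurable f :=
    (Integrable.of_integral_ne_zero (by simp [hf_int])).aestronglyMeasurable.aemeasurable
  have := isProbabilityMeasure_withDensity_ofReal hf_nonneg hf_int
  have h_moment := integrable_withDensity_ofReal hf hf_nonneg hf_moment
  have h_deriv {t : ℝ} (ht : 0 < t) := hasDerivAt_renormalizedEntropy h_moment ht
  have h_nonneg {t : ℝ} (ht : 0 < t) := integral_laplacian_log_add_mul_heatFlow_nonneg
    (μ := volume.withDensity fun x => ENNReal.ofReal (f x)) ht
  rw [finrank_euclideanSpace_fin] at h_deriv h_nonneg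
  simp only [shannonEntropy_sub_eq_renormalizedEntropy hf hf_nonneg,
    heatSol_eq_heatFlow_withDensity hf hf_nonneg, laplacian_eq_innerProductSpace_laplacian]
  exact ⟨fun t ht => ⟨h_deriv ht, neg_nonpos.2 (h_nonneg ht)⟩,
    fun s t hs hst => antitoneOn_renormalizedEntropy h_moment hs (hs.trans_le hst) hst⟩

/-- The renormalized entropy `H_n(u(t)) = H(u(t)) - (n/2)log(4πe t)` is nonincreasing:
its derivative is `-∫ (Δ log u + n/(2t)) u dx ≤ 0`. -/
theorem renormalized_entropy_nonincreasing (n : ℕ) (hn : 1 ≤ n)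
    (f : EuclideanSpace ℝ (Fin n) → ℝ)
    (hf_cont : Continuous f) (hf_nonneg : ∀ x, 0 ≤ f x)
    (hf_supp : HasCompactSupport f)
    (hf_int : ∫ x, f x = 1) :
    (∀ t : ℝ, 0 < t →
      HasDerivAt (fun s => shannonEntropy n f s
          - ((n : ℝ) / 2) * Real.log (4 * π * Real.exp 1 * s))
        (-∫ x, (laplacian n (fun y => Real.log (heatSol n f t y)) x + (n : ℝ) / (2 * t))
            * heatSol n f t x) t ∧
      (-∫ x, (laplacian n (fun y => Real.log (heatSol n f t y)) x + (n : ℝ) / (2 * t))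
            * heatSol n f t x) ≤ 0) ∧
    (∀ s t : ℝ, 0 < s → s ≤ t →
      shannonEntropy n f t - ((n : ℝ) / 2) * Real.log (4 * π * Real.exp 1 * t) ≤
        shannonEntropy n f s - ((n : ℝ) / 2) * Real.log (4 * π * Real.exp 1 * s)) := by
  exact renormalized_entropy_nonincreasing_general n f hf_nonneg hf_int <|
    ((continuous_norm.pow 2).mul hf_cont).integrable_of_hasCompactSupport hf_supp.mul_left
end

section
/- Let n ≥ 1 and let f : ℝⁿ → ℝ be a nonnegative, continuous, compactly supported function with ∫_{ℝⁿ} f dx = 1, and let u(t,x) = ∫_{ℝⁿ} (4πt)^{-n/2} exp(-‖x-y‖²/(4t)) f(y) dy. Then for all 0 < s ≤ t, N(u(t)) - N(u(s)) ≤ (t - s) · (2/n) · I(u(s)) · N(u(s)), where N(u(t)) = exp((2/n) H(u(t))) is the Shannon entropy power and I(u(s)) = ∫_{ℝⁿ} |∇ log u(s,x)|² u(s,x) dx is the Fisher information; in particular t ↦ N(u(t)) grows at most linearly with slope (2/n) I(u(s)) N(u(s)) past time s. -/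
open Real MeasureTheory

/-- The Shannon entropy power of the heat solution at time `t`. -/
noncomputable def entropyPower (n : ℕ) (f : EuclideanSpace ℝ (Fin n) → ℝ) (t : ℝ) : ℝ :=
  Real.exp ((2 / (n : ℝ)) * shannonEntropy n f t)

/-- The Fisher information of the heat solution at time `t`. -/
noncomputable def fisherInfo (n : ℕ) (f : EuclideanSpace ℝ (Fin n) → ℝ) (t : ℝ) : ℝ :=
  ∫ x, ‖gradient (fun y => Real.log (heatSol n f t y)) x‖ ^ 2 * heatSol n f t x

/-!
Write `u t = f ⋆ heatKernel t`, with entropy `H t` and Fisher information `I t`. For the kernel `G`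
at time `t` and any real `c`, the derivative of `u (s + t)` in the direction `v` is
`c (∂ᵥ u s) ⋆ G + (1 - c) u s ⋆ ∂ᵥ G`, so Cauchy–Schwarz against the weight `u s z * G (x - z)`
gives the Blachman–Stam inequality `I (s + t) ≤ c ^ 2 I s + (1 - c) ^ 2 n / (2 t)`, whose best case
is `1 / I (s + t) ≥ 1 / I s + 2 t / n`. By de Bruijn's identity `H' = I`, integrating
`H' r ≤ I s / (1 + (2 / n) (r - s) I s)` bounds `H t - H s` by
`(n / 2) log (1 + (2 / n) (t - s) I s)`. A finite second moment of `f` bounds `log u` quadratically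
in `x`, which together with Gaussian decay justifies differentiating under the integral sign.
-/

open Module Set
open scoped RealInnerProductSpace Convolution

namespace HeatFlow

section Kernel

variable {E F : Type*} [NormedAddCommGroup E] [InnerProductSpace ℝ E]
  [NormedAddCommGroup F] {t : ℝ}

/-- The Gauss–Weierstrass kernel, normalised so that it solves `∂ₜ u = Δ u`. -/
noncomputable def heatKernel (t : ℝ) (x : E) : ℝ :=
  (4 * π * t) ^ (-(finrank ℝ E : ℝ) / 2) * exp (-‖x‖ ^ 2 / (4 * t))

/-- The derivative of the heat kernel in the direction `v`. -/
noncomputable def heatKernelDeriv (t : ℝ) (v x : E) : ℝ :=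
  -(⟪v, x⟫ / (2 * t)) * heatKernel t x

/-- The second derivative of the heat kernel in the direction `v`. -/
noncomputable def heatKernelSecondDeriv (t : ℝ) (v x : E) : ℝ :=
  (⟪v, x⟫ ^ 2 / (4 * t ^ 2) - ‖v‖ ^ 2 / (2 * t)) * heatKernel t x

/-- The Laplacian, and hence also the time derivative, of the heat kernel. -/
noncomputable def heatKernelLaplacian (t : ℝ) (x : E) : ℝ :=
  (‖x‖ ^ 2 / (4 * t ^ 2) - finrank ℝ E / (2 * t)) * heatKernel t x

/-- A continuous function dominated by a multiple of some heat kernel; this makes it both bounded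
and integrable. -/
structure HasGaussianBound (k : E → F) : Prop where
  continuous : Continuous k
  exists_norm_le : ∃ C t, 0 ≤ C ∧ 0 < t ∧ ∀ x, ‖k x‖ ≤ C * heatKernel t x

lemma heatKernel_pos (ht : 0 < t) (x : E) : 0 < heatKernel t x := by
  unfold heatKernel
  positivity

lemma heatKernel_le (ht : 0 < t) (x : E) :
    heatKernel t x ≤ (4 * π * t) ^ (-(finrank ℝ E : ℝ) / 2) := by
  refine mul_le_of_le_one_right (by positivity) (exp_le_one_iff.2 ?_)
  exact div_nonpos_of_nonpos_of_nonneg (neg_nonpos.2 (sq_nonneg _)) (by positivity)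

lemma continuous_heatKernel (t : ℝ) : Continuous (heatKernel t : E → ℝ) := by
  unfold heatKernel
  fun_prop

lemma continuous_heatKernelDeriv (t : ℝ) (v : E) : Continuous (heatKernelDeriv t v) := by
  have := continuous_heatKernel (E := E) t
  unfold heatKernelDeriv
  fun_prop

lemma continuous_heatKernelLaplacian (t : ℝ) : Continuous (heatKernelLaplacian t : E → ℝ) := by
  have := continuous_heatKernel (E := E) t
  unfold heatKernelLaplacian
  fun_prop

-- Doubling the time leaves room in the exponent to absorb the factor `1 + ‖x‖ ^ 2`.
variable (E) in
lemma exists_one_add_norm_sq_mul_heatKernel_le {a b : ℝ} (ha : 0 < a) (hab : a ≤ b) :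
    ∃ C, 0 ≤ C ∧ ∀ t ∈ Icc a b, ∀ x : E,
      (1 + ‖x‖ ^ 2) * heatKernel t x ≤ C * heatKernel (2 * b) x := by
  have hb : 0 < b := ha.trans_le hab
  set d : ℝ := -(finrank ℝ E : ℝ) / 2 with hd
  refine ⟨(1 + 8 * b) * (4 * π * a) ^ d / (4 * π * (2 * b)) ^ d, by positivity, ?_⟩
  rintro t ⟨hat, htb⟩ x
  have ht : 0 < t := ha.trans_le hat
  set r := ‖x‖ ^ 2 / (8 * b) with hr
  have hr0 : 0 ≤ r := by positivity
  have hx : ‖x‖ ^ 2 = 8 * b * r := by rw [hr]; field_simp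
  have hpoly : 1 + ‖x‖ ^ 2 ≤ (1 + 8 * b) * exp r := by
    calc 1 + ‖x‖ ^ 2 ≤ (1 + 8 * b) * (r + 1) := by rw [hx]; nlinarith
      _ ≤ (1 + 8 * b) * exp r := by gcongr; exact add_one_le_exp r
  have hpow : (4 * π * t) ^ d ≤ (4 * π * a) ^ d :=
    rpow_le_rpow_of_nonpos (by positivity) (by gcongr)
      (div_nonpos_of_nonpos_of_nonneg (neg_nonpos.2 (Nat.cast_nonneg _)) zero_le_two)
  have hexp : exp (-‖x‖ ^ 2 / (4 * t)) ≤ exp (-(2 * r)) := by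
    have : 2 * r = ‖x‖ ^ 2 / (4 * b) := by rw [hr]; field_simp; ring
    rw [exp_le_exp, this, neg_div, neg_le_neg_iff]
    gcongr
  calc (1 + ‖x‖ ^ 2) * heatKernel t x
      ≤ (1 + 8 * b) * exp r * ((4 * π * a) ^ d * exp (-(2 * r))) := by
        unfold heatKernel; gcongr
    _ = (1 + 8 * b) * (4 * π * a) ^ d * exp (-r) := by
        rw [show -r = r + -(2 * r) by ring, exp_add]; ring
    _ = (1 + 8 * b) * (4 * π * a) ^ d / (4 * π * (2 * b)) ^ d * heatKernel (2 * b) x := by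
        unfold heatKernel
        rw [← hd, show -‖x‖ ^ 2 / (4 * (2 * b)) = -r by rw [hr]; ring]
        field_simp

lemma HasGaussianBound.of_norm_le_mul {k : E → F} {C : ℝ} (hk : Continuous k) (hC : 0 ≤ C)
    (ht : 0 < t) (h : ∀ x, ‖k x‖ ≤ C * ((1 + ‖x‖ ^ 2) * heatKernel t x)) :
    HasGaussianBound k := by
  obtain ⟨K, hK, hle⟩ := exists_one_add_norm_sq_mul_heatKernel_le E ht le_rfl
  refine ⟨hk, C * K, 2 * t, by positivity, by positivity, fun x => (h x).trans ?_⟩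
  rw [mul_assoc]
  exact mul_le_mul_of_nonneg_left (hle t ⟨le_rfl, le_rfl⟩ x) hC

lemma HasGaussianBound.exists_bound {k : E → F} (hk : HasGaussianBound k) :
    ∃ M, ∀ x, ‖k x‖ ≤ M := by
  obtain ⟨C, t, hC, ht, hle⟩ := hk.exists_norm_le
  exact ⟨_, fun x => (hle x).trans (mul_le_mul_of_nonneg_left (heatKernel_le ht x) hC)⟩

lemma HasGaussianBound.clm_apply [NormedSpace ℝ F] {k : E → E →L[ℝ] F} (hk : HasGaussianBound k)
    (v : E) : HasGaussianBound fun x => k x v := by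
  obtain ⟨C, t, hC, ht, hle⟩ := hk.exists_norm_le
  refine ⟨hk.continuous.clm_apply continuous_const, C * ‖v‖, t, by positivity, ht, fun x => ?_⟩
  calc ‖k x v‖ ≤ ‖k x‖ * ‖v‖ := (k x).le_opNorm v
    _ ≤ C * heatKernel t x * ‖v‖ := by gcongr; exact hle x
    _ = C * ‖v‖ * heatKernel t x := by ring

lemma hasGaussianBound_heatKernel (ht : 0 < t) : HasGaussianBound (heatKernel t : E → ℝ) :=
  ⟨continuous_heatKernel t, 1, t, zero_le_one, ht, fun x => by
    rw [one_mul, norm_of_nonneg (heatKernel_pos ht x).le]⟩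

lemma abs_heatKernelLaplacian_le (ht : 0 < t) (x : E) : |heatKernelLaplacian t x| ≤
    (1 / (4 * t ^ 2) + finrank ℝ E / (2 * t)) * ((1 + ‖x‖ ^ 2) * heatKernel t x) := by
  have hG := heatKernel_pos ht x
  rw [heatKernelLaplacian, abs_mul, abs_of_pos hG, ← mul_assoc]
  gcongr
  refine (abs_sub _ _).trans ?_
  rw [abs_of_nonneg (by positivity), abs_of_nonneg (by positivity), add_mul, div_mul_eq_mul_div]
  gcongr
  · linarith
  · exact le_mul_of_one_le_right (by positivity) (by linarith [sq_nonneg ‖x‖])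

lemma exists_abs_heatKernelLaplacian_le {a b : ℝ} (ha : 0 < a) (hab : a ≤ b) :
    ∃ C, 0 ≤ C ∧ ∀ t ∈ Icc a b, ∀ x : E,
      |heatKernelLaplacian t x| ≤ C * heatKernel (2 * b) x := by
  obtain ⟨C, hC, hle⟩ := exists_one_add_norm_sq_mul_heatKernel_le E ha hab
  refine ⟨(1 / (4 * a ^ 2) + finrank ℝ E / (2 * a)) * C, by positivity, fun t ht x => ?_⟩
  have ht0 : 0 < t := ha.trans_le ht.1
  calc |heatKernelLaplacian t x|
      ≤ (1 / (4 * t ^ 2) + finrank ℝ E / (2 * t)) * ((1 + ‖x‖ ^ 2) * heatKernel t x) :=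
        abs_heatKernelLaplacian_le ht0 x
    _ ≤ (1 / (4 * a ^ 2) + finrank ℝ E / (2 * a)) * (C * heatKernel (2 * b) x) := by
        have hG := heatKernel_pos ht0 x
        exact mul_le_mul (by gcongr <;> exact ht.1) (hle t ht x) (by positivity) (by positivity)
    _ = _ := by ring

lemma hasGaussianBound_heatKernelLaplacian (ht : 0 < t) :
    HasGaussianBound (heatKernelLaplacian t : E → ℝ) := by
  obtain ⟨C, hC, hle⟩ := exists_abs_heatKernelLaplacian_le (E := E) ht le_rfl
  exact ⟨continuous_heatKernelLaplacian t, C, 2 * t, hC, by positivity, hle t ⟨le_rfl, le_rfl⟩⟩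

lemma sum_heatKernelSecondDeriv {ι : Type*} [Fintype ι] (b : OrthonormalBasis ι ℝ E) (t : ℝ)
    (x : E) : ∑ i, heatKernelSecondDeriv t (b i) x = heatKernelLaplacian t x := by
  simp only [heatKernelSecondDeriv, heatKernelLaplacian, b.norm_eq_one]
  rw [← Finset.sum_mul, Finset.sum_sub_distrib, ← Finset.sum_div, b.sum_sq_inner_right]
  simp [finrank_eq_card_basis b.toBasis, div_eq_mul_inv]

lemma hasFDerivAt_heatKernel (t : ℝ) (x : E) :
    HasFDerivAt (heatKernel t) ((-(heatKernel t x / (2 * t))) • innerSL ℝ x) x := by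
  have hsq : HasFDerivAt (fun x : E => -‖x‖ ^ 2 / (4 * t))
      ((4 * t)⁻¹ • -(2 • innerSL ℝ x : E →L[ℝ] ℝ)) x := by
    simpa [div_eq_inv_mul] using ((hasStrictFDerivAt_norm_sq x).hasFDerivAt.neg).const_mul (4 * t)⁻¹
  refine (hsq.exp.const_mul ((4 * π * t) ^ (-(finrank ℝ E : ℝ) / 2))).congr_fderiv ?_
  ext y
  simp only [heatKernel, smul_neg, neg_apply, smul_apply, coe_innerSL_apply, nsmul_eq_mul,
    Nat.cast_ofNat, smul_eq_mul, neg_smul]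
  ring

lemma hasFDerivAt_heatKernelDeriv (t : ℝ) (v x : E) :
    HasFDerivAt (heatKernelDeriv t v) (-(heatKernel t x / (2 * t)) • innerSL ℝ v -
      (heatKernelDeriv t v x / (2 * t)) • innerSL ℝ x) x := by
  have hinner : HasFDerivAt (fun x : E => -(⟪v, x⟫ / (2 * t))) (-((2 * t)⁻¹ • innerSL ℝ v)) x := by
    simpa [div_eq_inv_mul] using
      (((innerSL ℝ v).hasFDerivAt (x := x)).const_mul (2 * t)⁻¹).fun_neg
  refine (hinner.mul (hasFDerivAt_heatKernel t x)).congr_fderiv ?_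
  ext y
  simp only [heatKernelDeriv, add_apply, sub_apply, neg_apply, smul_apply, coe_innerSL_apply,
    smul_eq_mul]
  ring

lemma differentiable_heatKernel (t : ℝ) : Differentiable ℝ (heatKernel t : E → ℝ) :=
  fun x => (hasFDerivAt_heatKernel t x).differentiableAt

lemma differentiable_heatKernelDeriv (t : ℝ) (v : E) : Differentiable ℝ (heatKernelDeriv t v) :=
  fun x => (hasFDerivAt_heatKernelDeriv t v x).differentiableAt

lemma fderiv_heatKernel_apply (t : ℝ) (x v : E) :
    fderiv ℝ (heatKernel t) x v = heatKernelDeriv t v x := by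
  rw [(hasFDerivAt_heatKernel t x).fderiv]
  simp only [heatKernelDeriv, smul_apply, coe_innerSL_apply, smul_eq_mul, real_inner_comm]
  ring

lemma fderiv_heatKernelDeriv_apply (t : ℝ) (x v : E) :
    fderiv ℝ (heatKernelDeriv t v) x v = heatKernelSecondDeriv t v x := by
  rw [(hasFDerivAt_heatKernelDeriv t v x).fderiv]
  simp only [heatKernelDeriv, heatKernelSecondDeriv, sub_apply, smul_apply, coe_innerSL_apply,
    smul_eq_mul, real_inner_self_eq_norm_sq, real_inner_comm]
  ring

lemma hasGaussianBound_fderiv_heatKernel (ht : 0 < t) :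
    HasGaussianBound (fderiv ℝ (heatKernel t : E → ℝ)) := by
  have hcont := continuous_heatKernel (E := E) t
  have hfderiv := funext fun x : E => (hasFDerivAt_heatKernel t x).fderiv
  rw [hfderiv]
  refine .of_norm_le_mul (C := 1 / (2 * t)) (by fun_prop) (by positivity) ht fun x => ?_
  have hx : ‖x‖ ≤ 1 + ‖x‖ ^ 2 := by nlinarith [sq_nonneg (‖x‖ - 1)]
  have hG := heatKernel_pos ht x
  rw [norm_smul, norm_neg, innerSL_apply_norm, norm_of_nonneg (by positivity)]
  calc heatKernel t x / (2 * t) * ‖x‖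
      ≤ heatKernel t x / (2 * t) * (1 + ‖x‖ ^ 2) := by gcongr
    _ = 1 / (2 * t) * ((1 + ‖x‖ ^ 2) * heatKernel t x) := by ring

lemma hasGaussianBound_fderiv_heatKernelDeriv (ht : 0 < t) (v : E) :
    HasGaussianBound (fderiv ℝ (heatKernelDeriv t v)) := by
  have hcont := continuous_heatKernel (E := E) t
  have hcont' := continuous_heatKernelDeriv t v
  have hfderiv := funext fun x : E => (hasFDerivAt_heatKernelDeriv t v x).fderiv
  rw [hfderiv]
  refine .of_norm_le_mul (C := ‖v‖ / (2 * t) + ‖v‖ / (4 * t ^ 2)) (by fun_prop) (by positivity)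
    ht fun x => (norm_sub_le _ _).trans ?_
  have hG := heatKernel_pos ht x
  have hv : |⟪v, x⟫| ≤ ‖v‖ * ‖x‖ := abs_real_inner_le_norm v x
  have hderiv : |heatKernelDeriv t v x| ≤ ‖v‖ * ‖x‖ / (2 * t) * heatKernel t x := by
    rw [heatKernelDeriv, abs_mul, abs_neg, abs_div, abs_of_pos hG,
      abs_of_pos (by positivity : 0 < 2 * t)]
    gcongr
  simp only [norm_smul, norm_neg, innerSL_apply_norm, norm_div, norm_eq_abs, abs_of_pos hG,
    abs_of_pos (by positivity : 0 < 2 * t)]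
  calc heatKernel t x / (2 * t) * ‖v‖ + |heatKernelDeriv t v x| / (2 * t) * ‖x‖
      ≤ heatKernel t x / (2 * t) * ‖v‖ +
          ‖v‖ * ‖x‖ / (2 * t) * heatKernel t x / (2 * t) * ‖x‖ := by gcongr
    _ = (‖v‖ / (2 * t) * 1 + ‖v‖ / (4 * t ^ 2) * ‖x‖ ^ 2) * heatKernel t x := by
        field_simp; ring
    _ ≤ (‖v‖ / (2 * t) * (1 + ‖x‖ ^ 2) + ‖v‖ / (4 * t ^ 2) * (1 + ‖x‖ ^ 2)) *
          heatKernel t x := by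
        gcongr <;> linarith [sq_nonneg ‖x‖]
    _ = _ := by ring

lemma hasGaussianBound_heatKernelDeriv (ht : 0 < t) (v : E) :
    HasGaussianBound (heatKernelDeriv t v) := by
  simpa only [fderiv_heatKernel_apply] using (hasGaussianBound_fderiv_heatKernel ht).clm_apply v

lemma hasGaussianBound_heatKernelSecondDeriv (ht : 0 < t) (v : E) :
    HasGaussianBound (heatKernelSecondDeriv t v) := by
  simpa only [fderiv_heatKernelDeriv_apply] using
    (hasGaussianBound_fderiv_heatKernelDeriv ht v).clm_apply v

lemma heatKernelDeriv_sq_div (ht : 0 < t) (v x : E) : heatKernelDeriv t v x ^ 2 / heatKernel t x =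
    heatKernelSecondDeriv t v x + ‖v‖ ^ 2 / (2 * t) * heatKernel t x := by
  have := (heatKernel_pos ht x).ne'
  rw [heatKernelDeriv, heatKernelSecondDeriv]
  field_simp
  ring

lemma hasGaussianBound_heatKernelDeriv_sq_div (ht : 0 < t) (v : E) :
    HasGaussianBound fun x => heatKernelDeriv t v x ^ 2 / heatKernel t x := by
  refine .of_norm_le_mul (C := ‖v‖ ^ 2 / (4 * t ^ 2)) ?_ (by positivity) ht fun x => ?_
  · exact ((continuous_heatKernelDeriv t v).pow 2).div (continuous_heatKernel t)
      fun x => (heatKernel_pos ht x).ne'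
  have hG := heatKernel_pos ht x
  have hinner : ⟪v, x⟫ ^ 2 ≤ ‖v‖ ^ 2 * ‖x‖ ^ 2 := by
    rw [← sq_abs, ← mul_pow]
    exact pow_le_pow_left₀ (abs_nonneg _) (abs_real_inner_le_norm v x) 2
  rw [norm_of_nonneg (by positivity)]
  calc heatKernelDeriv t v x ^ 2 / heatKernel t x
      = ⟪v, x⟫ ^ 2 / (4 * t ^ 2) * heatKernel t x := by
        rw [heatKernelDeriv]; field_simp; ring
    _ ≤ ‖v‖ ^ 2 * (1 + ‖x‖ ^ 2) / (4 * t ^ 2) * heatKernel t x := by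
        gcongr; nlinarith [sq_nonneg ‖v‖]
    _ = ‖v‖ ^ 2 / (4 * t ^ 2) * ((1 + ‖x‖ ^ 2) * heatKernel t x) := by ring

lemma hasDerivAt_heatKernel_time (ht : 0 < t) (x : E) :
    HasDerivAt (fun s => heatKernel s x) (heatKernelLaplacian t x) t := by
  have hpow : HasDerivAt (fun s : ℝ => (4 * π * s) ^ (-(finrank ℝ E : ℝ) / 2))
      (4 * π * (-(finrank ℝ E : ℝ) / 2) * (4 * π * t) ^ (-(finrank ℝ E : ℝ) / 2 - 1)) t := by
    simpa using ((hasDerivAt_id t).const_mul (4 * π)).rpow_const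
      (p := -(finrank ℝ E : ℝ) / 2) (Or.inl (by positivity))
  have hexp : HasDerivAt (fun s : ℝ => -‖x‖ ^ 2 / (4 * s)) (‖x‖ ^ 2 / (4 * t ^ 2)) t := by
    refine ((((hasDerivAt_id t).const_mul 4).inv (by positivity)).const_mul
      (-‖x‖ ^ 2)).congr_deriv ?_
    simp only [id]
    field_simp
  refine (hpow.mul hexp.exp).congr_deriv ?_
  rw [rpow_sub_one (by positivity)]
  simp only [heatKernelLaplacian, heatKernel]
  field_simp
  ring

lemma heatKernel_mul_heatKernel_sub {s : ℝ} (hs : 0 < s) (ht : 0 < t) (x y : E) :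
    heatKernel s y * heatKernel t (x - y) =
      heatKernel (s + t) x * heatKernel (s * t / (s + t)) (y - (s / (s + t)) • x) := by
  have hpow (p : ℝ) : (4 * π * s) ^ p * (4 * π * t) ^ p =
      (4 * π * (s + t)) ^ p * (4 * π * (s * t / (s + t))) ^ p := by
    rw [← mul_rpow (by positivity) (by positivity), ← mul_rpow (by positivity) (by positivity)]
    congr 1
    field_simp
  have hsq : -‖y‖ ^ 2 / (4 * s) + -‖x - y‖ ^ 2 / (4 * t) = -‖x‖ ^ 2 / (4 * (s + t)) +
      -‖y - (s / (s + t)) • x‖ ^ 2 / (4 * (s * t / (s + t))) := by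
    rw [norm_sub_sq_real, norm_sub_sq_real, norm_smul, inner_smul_right, real_inner_comm,
      norm_of_nonneg (by positivity)]
    field_simp
    ring
  simp only [heatKernel]
  rw [mul_mul_mul_comm, hpow, ← exp_add, hsq, exp_add, mul_mul_mul_comm]

end Kernel

section Convolution

variable {E F : Type*} [NormedAddCommGroup E] [InnerProductSpace ℝ E] [FiniteDimensional ℝ E]
  [MeasurableSpace E] [BorelSpace E] [NormedAddCommGroup F] {f k l : E → ℝ} {s t : ℝ}

lemma integral_heatKernel (ht : 0 < t) : ∫ x : E, heatKernel t x = 1 := by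
  have hGaussian := GaussianFourier.integral_rexp_neg_mul_sq_norm (V := E) (b := (4 * t)⁻¹)
    (by positivity)
  have hscale : π / (4 * t)⁻¹ = 4 * π * t := by field_simp
  simp only [hscale, neg_mul, ← div_eq_inv_mul, ← neg_div] at hGaussian
  simp only [heatKernel]
  rw [integral_const_mul, hGaussian, ← rpow_add (by positivity)]
  ring_nf
  exact rpow_zero _

lemma integrable_heatKernel (ht : 0 < t) : Integrable (heatKernel t : E → ℝ) :=
  integrable_of_integral_eq_one (integral_heatKernel ht)

lemma HasGaussianBound.integrable {k : E → F} (hk : HasGaussianBound k) : Integrable k := by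
  obtain ⟨C, t, -, ht, hle⟩ := hk.exists_norm_le
  exact ((integrable_heatKernel ht).const_mul C).mono' hk.continuous.aestronglyMeasurable
    (ae_of_all _ hle)

lemma HasGaussianBound.convolutionExistsAt [NormedSpace ℝ F] {k : E → F} (hf : Integrable f)
    (hk : HasGaussianBound k) (x : E) :
    ConvolutionExistsAt f k x (.lsmul ℝ ℝ) := by
  obtain ⟨M, hM⟩ := hk.exists_bound
  have := hk.continuous
  exact hf.smul_bdd M (by fun_prop : Continuous fun y => k (x - y)).aestronglyMeasurable
    (ae_of_all _ fun y => hM _)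

lemma HasGaussianBound.integrable_convolution (hf : Integrable f) (hk : HasGaussianBound k) :
    Integrable (f ⋆ k) :=
  Integrable.integrable_convolution _ hf hk.integrable

lemma HasGaussianBound.integral_convolution (hf : Integrable f) (hk : HasGaussianBound k) :
    ∫ x, (f ⋆ k) x = (∫ x, f x) * ∫ x, k x :=
  MeasureTheory.integral_convolution _ hf hk.integrable

lemma HasGaussianBound.convolution_assoc (hf : Integrable f) (hk : HasGaussianBound k)
    (hl : HasGaussianBound l) : (f ⋆ k) ⋆ l = f ⋆ (k ⋆ l) := by
  obtain ⟨M, hM⟩ := hl.exists_bound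
  ext x
  refine MeasureTheory.convolution_assoc _ _ _ _ (fun a b c => mul_assoc a b c)
    hf.aestronglyMeasurable hk.integrable.aestronglyMeasurable hl.integrable.aestronglyMeasurable
    (ae_of_all _ (hk.convolutionExistsAt hf))
    (Integrable.ae_convolution_exists _ hk.integrable.norm hl.integrable.norm) ?_
  have hcont : Continuous ((fun y => ‖k y‖) ⋆[.mul ℝ ℝ] fun y => ‖l y‖) :=
    BddAbove.continuous_convolution_right_of_integrable _
      ⟨M, by rintro _ ⟨y, rfl⟩; simpa using hM y⟩ hk.integrable.norm hl.continuous.norm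
  refine hf.norm.mul_bdd (c := ∫ y, ‖k y‖ * M)
    (by fun_prop : Continuous fun y => _).aestronglyMeasurable (ae_of_all _ fun y => ?_)
  refine norm_integral_le_of_norm_le (hk.integrable.norm.mul_const M) (ae_of_all _ fun z => ?_)
  simpa using mul_le_mul_of_nonneg_left (hM (x - y - z)) (norm_nonneg (k z))

lemma hasFDerivAt_convolution (hf : Integrable f) (hk : HasGaussianBound k)
    (hk_diff : Differentiable ℝ k) (hk_fderiv : HasGaussianBound (fderiv ℝ k)) (x : E) :
    HasFDerivAt (f ⋆ k) ((f ⋆ fderiv ℝ k) x) x := by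
  obtain ⟨M, hM⟩ := hk_fderiv.exists_bound
  exact hasFDerivAt_integral_of_dominated_of_fderiv_le (s := univ)
    (F := fun x y => f y • k (x - y)) (F' := fun x y => f y • fderiv ℝ k (x - y))
    (bound := fun y => ‖f y‖ * M) Filter.univ_mem
    (.of_forall fun x => (hk.convolutionExistsAt hf x).aestronglyMeasurable)
    (hk.convolutionExistsAt hf x) (hk_fderiv.convolutionExistsAt hf x).aestronglyMeasurable
    (ae_of_all _ fun y x _ => (norm_smul_le _ _).trans
      (mul_le_mul_of_nonneg_left (hM _) (norm_nonneg _)))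
    (hf.norm.mul_const M)
    (ae_of_all _ fun y x _ =>
      ((hasFDerivAt_comp_sub y).2 (hk_diff (x - y)).hasFDerivAt).const_smul (f y))

lemma hasLineDerivAt_convolution (hf : Integrable f) (hk : HasGaussianBound k)
    (hk_diff : Differentiable ℝ k) (hk_fderiv : HasGaussianBound (fderiv ℝ k)) (x v : E) :
    HasLineDerivAt ℝ (f ⋆ k) ((f ⋆ fun z => fderiv ℝ k z v) x) x v := by
  have := (hasFDerivAt_convolution hf hk hk_diff hk_fderiv x).hasLineDerivAt v
  rwa [convolution_def, ContinuousLinearMap.integral_apply (hk_fderiv.convolutionExistsAt hf x) v]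
    at this

lemma differentiable_convolution_heatKernel (hf : Integrable f) (ht : 0 < t) :
    Differentiable ℝ (f ⋆ heatKernel t) := fun x =>
  (hasFDerivAt_convolution hf (hasGaussianBound_heatKernel ht) (differentiable_heatKernel t)
    (hasGaussianBound_fderiv_heatKernel ht) x).differentiableAt

lemma hasLineDerivAt_convolution_heatKernel (hf : Integrable f) (ht : 0 < t) (x v : E) :
    HasLineDerivAt ℝ (f ⋆ heatKernel t) ((f ⋆ heatKernelDeriv t v) x) x v := by
  simpa only [fderiv_heatKernel_apply] using
    hasLineDerivAt_convolution hf (hasGaussianBound_heatKernel ht) (differentiable_heatKernel t)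
      (hasGaussianBound_fderiv_heatKernel ht) x v

lemma hasLineDerivAt_convolution_heatKernelDeriv (hf : Integrable f) (ht : 0 < t) (x v : E) :
    HasLineDerivAt ℝ (f ⋆ heatKernelDeriv t v) ((f ⋆ heatKernelSecondDeriv t v) x) x v := by
  simpa only [fderiv_heatKernelDeriv_apply] using
    hasLineDerivAt_convolution hf (hasGaussianBound_heatKernelDeriv ht v)
      (differentiable_heatKernelDeriv t v) (hasGaussianBound_fderiv_heatKernelDeriv ht v) x v

lemma hasDerivAt_convolution_heatKernel_time (hf : Integrable f) (ht : 0 < t) (x : E) :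
    HasDerivAt (fun s => (f ⋆ heatKernel s) x) ((f ⋆ heatKernelLaplacian t) x) t := by
  obtain ⟨C, -, hC⟩ := exists_abs_heatKernelLaplacian_le (E := E) (half_pos ht)
    (by linarith : t / 2 ≤ 2 * t)
  have hmem : Ioo (t / 2) (2 * t) ∈ nhds t := Ioo_mem_nhds (by linarith) (by linarith)
  have hbound := (hasGaussianBound_heatKernel (E := E) (t := 2 * (2 * t)) (by positivity))
  refine (hasDerivAt_integral_of_dominated_loc_of_deriv_le
    (F := fun s y => f y * heatKernel s (x - y))
    (F' := fun s y => f y * heatKernelLaplacian s (x - y))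
    (bound := fun y => C * (‖f y‖ * heatKernel (2 * (2 * t)) (x - y))) hmem
    ?_ ((hasGaussianBound_heatKernel ht).convolutionExistsAt hf x)
    ((hasGaussianBound_heatKernelLaplacian ht).convolutionExistsAt hf x).aestronglyMeasurable
    (ae_of_all _ fun y s hs => ?_) ((hbound.convolutionExistsAt hf.norm x).const_mul C)
    (ae_of_all _ fun y s hs => ?_)).2
  · filter_upwards [hmem] with s hs
    exact ((hasGaussianBound_heatKernel (by linarith [hs.1])).convolutionExistsAt hf
      x).aestronglyMeasurable
  · rw [norm_mul, mul_left_comm]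
    gcongr
    exact hC s ⟨hs.1.le, hs.2.le⟩ _
  · exact (hasDerivAt_heatKernel_time (by linarith [hs.1]) (x - y)).const_mul (f y)

lemma integral_eq_zero_of_hasLineDerivAt {g g' : E → ℝ} {v : E} (hg : Integrable g)
    (hg' : Integrable g') (hderiv : ∀ x, HasLineDerivAt ℝ g (g' x) x v) : ∫ x, g' x = 0 := by
  have := integral_bilinear_hasLineDerivAt_right_eq_neg_left_of_integrable (μ := volume)
    (B := .mul ℝ ℝ) (f := fun _ : E => (1 : ℝ)) (f' := 0) (g := g) (g' := g') (v := v)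
    (by simp) (by simpa using hg') (by simpa using hg)
    (fun x _ => by simpa using (hasFDerivAt_const (1 : ℝ) x).hasLineDerivAt v) fun x _ => hderiv x
  simpa using this

lemma integral_heatKernelDeriv (ht : 0 < t) (v : E) : ∫ x, heatKernelDeriv t v x = 0 :=
  integral_eq_zero_of_hasLineDerivAt (integrable_heatKernel ht)
    (hasGaussianBound_heatKernelDeriv ht v).integrable fun x => by
      simpa only [fderiv_heatKernel_apply] using
        (differentiable_heatKernel t x).hasFDerivAt.hasLineDerivAt v

lemma integral_heatKernelSecondDeriv (ht : 0 < t) (v : E) :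
    ∫ x, heatKernelSecondDeriv t v x = 0 :=
  integral_eq_zero_of_hasLineDerivAt (hasGaussianBound_heatKernelDeriv ht v).integrable
    (hasGaussianBound_heatKernelSecondDeriv ht v).integrable fun x => by
      simpa only [fderiv_heatKernelDeriv_apply] using
        (differentiable_heatKernelDeriv t v x).hasFDerivAt.hasLineDerivAt v

lemma integral_heatKernelDeriv_sq_div (ht : 0 < t) (v : E) :
    ∫ x, heatKernelDeriv t v x ^ 2 / heatKernel t x = ‖v‖ ^ 2 / (2 * t) := by
  simp only [heatKernelDeriv_sq_div ht]
  rw [integral_add (hasGaussianBound_heatKernelSecondDeriv ht v).integrable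
    ((integrable_heatKernel ht).const_mul _), integral_const_mul, integral_heatKernel ht,
    integral_heatKernelSecondDeriv ht]
  ring

lemma heatKernel_convolution_heatKernel (hs : 0 < s) (ht : 0 < t) :
    (heatKernel s : E → ℝ) ⋆ heatKernel t = heatKernel (s + t) := by
  ext x
  rw [convolution_lsmul]
  simp only [smul_eq_mul, heatKernel_mul_heatKernel_sub hs ht]
  rw [integral_const_mul, integral_sub_right_eq_self (heatKernel _),
    integral_heatKernel (by positivity), mul_one]

lemma integral_convolution_heatKernel (hf : Integrable f) (ht : 0 < t) :
    ∫ x, (f ⋆ heatKernel t) x = ∫ x, f x := by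
  rw [(hasGaussianBound_heatKernel ht).integral_convolution hf, integral_heatKernel ht, mul_one]

lemma convolution_heatKernel_heatKernel (hf : Integrable f) (hs : 0 < s) (ht : 0 < t) :
    (f ⋆ heatKernel s) ⋆ heatKernel t = f ⋆ heatKernel (s + t) := by
  rw [(hasGaussianBound_heatKernel hs).convolution_assoc hf (hasGaussianBound_heatKernel ht),
    heatKernel_convolution_heatKernel hs ht]

lemma convolution_heatKernel_heatKernelDeriv (hf : Integrable f) (hs : 0 < s) (ht : 0 < t)
    (v : E) : (f ⋆ heatKernel s) ⋆ heatKernelDeriv t v = f ⋆ heatKernelDeriv (s + t) v := by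
  ext x
  have hleft := hasLineDerivAt_convolution_heatKernel
    ((hasGaussianBound_heatKernel hs).integrable_convolution hf) ht x v
  rw [convolution_heatKernel_heatKernel hf hs ht] at hleft
  exact hleft.unique (hasLineDerivAt_convolution_heatKernel hf (add_pos hs ht) x v)

lemma convolution_heatKernelDeriv_heatKernel (hf : Integrable f) (hs : 0 < s) (ht : 0 < t)
    (v : E) : (f ⋆ heatKernelDeriv s v) ⋆ heatKernel t = f ⋆ heatKernelDeriv (s + t) v := by
  have hG := hasGaussianBound_heatKernel (E := E) ht
  have hG' := hasGaussianBound_heatKernelDeriv hs v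
  have hcomm : heatKernelDeriv s v ⋆ heatKernel t = heatKernel t ⋆ heatKernelDeriv s v := by
    ext x
    rw [convolution_lsmul, convolution_lsmul_swap]
    simp only [smul_eq_mul, mul_comm]
  rw [hG'.convolution_assoc hf hG, hcomm, ← hG.convolution_assoc hf hG',
    convolution_heatKernel_heatKernelDeriv hf ht hs, add_comm]

end Convolution

section FisherInformation

lemma sq_integral_le_integral_mul_integral {α : Type*} [MeasurableSpace α] {μ : Measure α}
    {a b w : α → ℝ} (ha : Integrable a μ) (hb : Integrable b μ) (hw : Integrable w μ)
    (hb_nonneg : ∀ x, 0 ≤ b x) (hw_nonneg : ∀ x, 0 ≤ w x) (h : ∀ x, a x ^ 2 ≤ w x * b x) :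
    (∫ x, a x ∂μ) ^ 2 ≤ (∫ x, w x ∂μ) * ∫ x, b x ∂μ := by
  have hpointwise (c : ℝ) (x : α) : 0 ≤ c * c * w x + 2 * c * a x + b x := by
    rcases (hw_nonneg x).eq_or_lt' with hwx | hwx
    · have hax : a x = 0 := by simpa [hwx, sq_nonpos_iff] using h x
      simpa [hwx, hax] using hb_nonneg x
    · refine (mul_nonneg_iff_of_pos_left hwx).1 ?_
      linarith [h x, sq_nonneg (c * w x + a x)]
  have hquadratic (c : ℝ) :
      0 ≤ (∫ x, w x ∂μ) * (c * c) + 2 * (∫ x, a x ∂μ) * c + ∫ x, b x ∂μ := by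
    have : 0 ≤ ∫ x, c * c * w x + 2 * c * a x + b x ∂μ := integral_nonneg (hpointwise c)
    rw [integral_add ((hw.const_mul _).fun_add (ha.const_mul _)) hb,
      integral_add (hw.const_mul _) (ha.const_mul _), integral_const_mul,
      integral_const_mul] at this
    linarith
  have := discrim_le_zero hquadratic
  rw [discrim] at this
  linarith

variable {E : Type*} [NormedAddCommGroup E] [InnerProductSpace ℝ E] [FiniteDimensional ℝ E]
  [MeasurableSpace E] [BorelSpace E] {f : E → ℝ} {s t : ℝ}

/-- The contribution of the direction `v` to the Fisher information of the heat flow of `f` at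
time `t`, i.e. `∫ (∂ᵥu)² / u` for `u = f ⋆ heatKernel t`. -/
noncomputable def directionalFisherInfo (f : E → ℝ) (t : ℝ) (v : E) : ℝ :=
  ∫ x, (f ⋆ heatKernelDeriv t v) x ^ 2 / (f ⋆ heatKernel t) x

lemma convolution_heatKernel_pos (hf : ∀ x, 0 ≤ f x) (hf_int : ∫ x, f x = 1) (ht : 0 < t)
    (x : E) : 0 < (f ⋆ heatKernel t) x := by
  have hf' := integrable_of_integral_eq_one hf_int
  have hG (y : E) : 0 < heatKernel t (x - y) := heatKernel_pos ht _
  have hsupport : Function.support (fun y => f y * heatKernel t (x - y)) = Function.support f := by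
    ext y
    simp [(hG y).ne']
  refine (integral_pos_iff_support_of_nonneg (fun y => mul_nonneg (hf y) (hG y).le)
    ((hasGaussianBound_heatKernel ht).convolutionExistsAt hf' x)).2 ?_
  rw [hsupport, ← integral_pos_iff_support_of_nonneg hf hf', hf_int]
  exact one_pos

lemma HasGaussianBound.continuous_convolution {k : E → ℝ} (hf : Integrable f)
    (hk : HasGaussianBound k) : Continuous (f ⋆ k) := by
  obtain ⟨M, hM⟩ := hk.exists_bound
  exact BddAbove.continuous_convolution_right_of_integrable _
    ⟨M, by rintro _ ⟨y, rfl⟩; exact hM y⟩ hf hk.continuous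

lemma convolution_heatKernelDeriv_sq_div_le (hf : ∀ x, 0 ≤ f x) (hf_int : ∫ x, f x = 1)
    (ht : 0 < t) (v x : E) : (f ⋆ heatKernelDeriv t v) x ^ 2 / (f ⋆ heatKernel t) x ≤
      (f ⋆ fun z => heatKernelDeriv t v z ^ 2 / heatKernel t z) x := by
  have hf' := integrable_of_integral_eq_one hf_int
  have hG (y : E) : 0 < heatKernel t (x - y) := heatKernel_pos ht _
  refine (div_le_iff₀' (convolution_heatKernel_pos hf hf_int ht x)).2 <|
    sq_integral_le_integral_mul_integral
      ((hasGaussianBound_heatKernelDeriv ht v).convolutionExistsAt hf' x)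
      ((hasGaussianBound_heatKernelDeriv_sq_div ht v).convolutionExistsAt hf' x)
      ((hasGaussianBound_heatKernel ht).convolutionExistsAt hf' x)
      (fun y => mul_nonneg (hf y) (div_nonneg (sq_nonneg _) (hG y).le))
      (fun y => mul_nonneg (hf y) (hG y).le) fun y => le_of_eq ?_
  have := (hG y).ne'
  simp only [ContinuousLinearMap.lsmul_apply, smul_eq_mul]
  field_simp

lemma integrable_convolution_heatKernelDeriv_sq_div (hf : ∀ x, 0 ≤ f x) (hf_int : ∫ x, f x = 1)
    (ht : 0 < t) (v : E) :
    Integrable fun x => (f ⋆ heatKernelDeriv t v) x ^ 2 / (f ⋆ heatKernel t) x := by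
  have hf' := integrable_of_integral_eq_one hf_int
  have hpos := convolution_heatKernel_pos hf hf_int ht
  refine ((hasGaussianBound_heatKernelDeriv_sq_div ht v).integrable_convolution hf').mono'
    (Continuous.aestronglyMeasurable ?_) (ae_of_all _ fun x => ?_)
  · exact (((hasGaussianBound_heatKernelDeriv ht v).continuous_convolution hf').pow 2).div
      ((hasGaussianBound_heatKernel ht).continuous_convolution hf') fun x => (hpos x).ne'
  · rw [norm_of_nonneg (div_nonneg (sq_nonneg _) (hpos x).le)]
    exact convolution_heatKernelDeriv_sq_div_le hf hf_int ht v x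

-- Cauchy–Schwarz for the integral of `c * d z * p (x - z) + (1 - c) * u z * q (x - z)`, whose value
-- is `(d ⋆ p) x` for every `c`, against the weight `u z * p (x - z)`.
lemma convolution_sq_div_le {u d p q : E → ℝ} (hu : ∀ x, 0 < u x) (hp : ∀ x, 0 < p x)
    (hu_int : Integrable u) (hd_int : Integrable d) (hdu_int : Integrable fun x => d x ^ 2 / u x)
    (hp_gauss : HasGaussianBound p) (hq_gauss : HasGaussianBound q)
    (hqp_gauss : HasGaussianBound fun x => q x ^ 2 / p x) (hswap : u ⋆ q = d ⋆ p)
    (hup : ∀ x, 0 < (u ⋆ p) x) (c : ℝ) (x : E) :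
    (d ⋆ p) x ^ 2 / (u ⋆ p) x ≤ c ^ 2 * ((fun x => d x ^ 2 / u x) ⋆ p) x +
      2 * c * (1 - c) * (d ⋆ q) x + (1 - c) ^ 2 * (u ⋆ fun x => q x ^ 2 / p x) x := by
  have hdp := (hp_gauss.convolutionExistsAt hd_int x).const_mul c
  have huq := (hq_gauss.convolutionExistsAt hu_int x).const_mul (1 - c)
  have hdup := (hp_gauss.convolutionExistsAt hdu_int x).const_mul (c ^ 2)
  have hdq := (hq_gauss.convolutionExistsAt hd_int x).const_mul (2 * c * (1 - c))
  have huqp := (hqp_gauss.convolutionExistsAt hu_int x).const_mul ((1 - c) ^ 2)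
  simp only [ContinuousLinearMap.lsmul_apply, smul_eq_mul] at hdp huq hdup hdq huqp
  have hw (z : E) : 0 < u z * p (x - z) := mul_pos (hu z) (hp _)
  have hsq (z : E) : (c * (d z * p (x - z)) + (1 - c) * (u z * q (x - z))) ^ 2 =
      u z * p (x - z) * (c ^ 2 * (d z ^ 2 / u z * p (x - z)) +
        2 * c * (1 - c) * (d z * q (x - z)) +
        (1 - c) ^ 2 * (u z * (q (x - z) ^ 2 / p (x - z)))) := by
    have := (hu z).ne'
    have := (hp (x - z)).ne'
    field_simp
    ring
  have hcs := sq_integral_le_integral_mul_integral (hdp.fun_add huq)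
    ((hdup.fun_add hdq).fun_add huqp) (hp_gauss.convolutionExistsAt hu_int x)
    (fun z => (mul_nonneg_iff_of_pos_left (hw z)).1 (hsq z ▸ sq_nonneg _)) (fun z => (hw z).le)
    fun z => (hsq z).le
  rw [integral_add hdp huq, integral_add (hdup.fun_add hdq) huqp, integral_add hdup hdq] at hcs
  simp only [integral_const_mul] at hcs
  have hmean : c * (d ⋆ p) x + (1 - c) * (u ⋆ q) x = (d ⋆ p) x := by rw [hswap]; ring
  rw [div_le_iff₀' (hup x), ← hmean]
  exact hcs

lemma directionalFisherInfo_add_le (hf : ∀ x, 0 ≤ f x) (hf_int : ∫ x, f x = 1) (hs : 0 < s)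
    (ht : 0 < t) (v : E) (c : ℝ) : directionalFisherInfo f (s + t) v ≤
      c ^ 2 * directionalFisherInfo f s v + (1 - c) ^ 2 * (‖v‖ ^ 2 / (2 * t)) := by
  have hf' := integrable_of_integral_eq_one hf_int
  have hG := hasGaussianBound_heatKernel (E := E) ht
  have hG' := hasGaussianBound_heatKernelDeriv ht v
  have hG'G := hasGaussianBound_heatKernelDeriv_sq_div ht v
  have hu_int := (hasGaussianBound_heatKernel hs).integrable_convolution hf'
  have hd_int := (hasGaussianBound_heatKernelDeriv hs v).integrable_convolution hf'
  have hdu_int := integrable_convolution_heatKernelDeriv_sq_div hf hf_int hs v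
  have hpos := convolution_heatKernel_pos hf hf_int (add_pos hs ht)
  have huG := convolution_heatKernel_heatKernel hf' hs ht
  have hdG := convolution_heatKernelDeriv_heatKernel hf' hs ht v
  have hpointwise (x : E) := convolution_sq_div_le (convolution_heatKernel_pos hf hf_int hs)
    (heatKernel_pos ht) hu_int hd_int hdu_int hG hG' hG'G
    ((convolution_heatKernel_heatKernelDeriv hf' hs ht v).trans hdG.symm)
    (fun x => by rw [huG]; exact hpos x) c x
  have h1 := (hG.integrable_convolution hdu_int).const_mul (c ^ 2)
  have h2 := (hG'.integrable_convolution hd_int).const_mul (2 * c * (1 - c))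
  have h3 := (hG'G.integrable_convolution hu_int).const_mul ((1 - c) ^ 2)
  rw [huG, hdG] at hpointwise
  refine (integral_mono (integrable_convolution_heatKernelDeriv_sq_div hf hf_int (add_pos hs ht) v)
    ((h1.fun_add h2).fun_add h3) hpointwise).trans_eq ?_
  rw [integral_add (h1.fun_add h2) h3, integral_add h1 h2]
  simp only [integral_const_mul]
  rw [hG.integral_convolution hdu_int, hG'.integral_convolution hd_int,
    hG'G.integral_convolution hu_int, integral_heatKernel ht, integral_heatKernelDeriv ht,
    integral_heatKernelDeriv_sq_div ht, integral_convolution_heatKernel hf' hs, hf_int,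
    directionalFisherInfo]
  ring

end FisherInformation

section Entropy

variable {E : Type*} [NormedAddCommGroup E] [InnerProductSpace ℝ E] [FiniteDimensional ℝ E]
  [MeasurableSpace E] [BorelSpace E] {f k : E → ℝ} {s t : ℝ}

/-- Probability densities of finite second moment: the initial data for which the heat flow has
finite entropy at all positive times. -/
structure IsSecondMomentDensity (f : E → ℝ) : Prop where
  nonneg : ∀ x, 0 ≤ f x
  integral_eq_one : ∫ x, f x = 1
  integrable_norm_sq_mul : Integrable fun x => ‖x‖ ^ 2 * f x

namespace IsSecondMomentDensity

lemma integrable (hf : IsSecondMomentDensity f) : Integrable f :=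
  integrable_of_integral_eq_one hf.integral_eq_one

lemma convolution_heatKernel_pos (hf : IsSecondMomentDensity f) (ht : 0 < t) (x : E) :
    0 < (f ⋆ heatKernel t) x :=
  HeatFlow.convolution_heatKernel_pos hf.nonneg hf.integral_eq_one ht x

lemma convolution_heatKernel_le (hf : IsSecondMomentDensity f) (ht : 0 < t) (x : E) :
    (f ⋆ heatKernel t) x ≤ (4 * π * t) ^ (-(finrank ℝ E : ℝ) / 2) := by
  calc (f ⋆ heatKernel t) x
      ≤ ∫ y, f y * (4 * π * t) ^ (-(finrank ℝ E : ℝ) / 2) :=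
        integral_mono ((hasGaussianBound_heatKernel ht).convolutionExistsAt hf.integrable x)
          (hf.integrable.mul_const _)
          fun y => mul_le_mul_of_nonneg_left (heatKernel_le ht _) (hf.nonneg y)
    _ = (4 * π * t) ^ (-(finrank ℝ E : ℝ) / 2) := by
        rw [integral_mul_const, hf.integral_eq_one, one_mul]

-- Jensen's inequality for `exp`, in the form of integrating the tangent line at the mean of the
-- exponent.
lemma le_convolution_heatKernel (hf : IsSecondMomentDensity f) (ht : 0 < t) (x : E) :
    (4 * π * t) ^ (-(finrank ℝ E : ℝ) / 2) * exp (-(‖x‖ ^ 2 + ∫ y, ‖y‖ ^ 2 * f y) / (2 * t)) ≤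
      (f ⋆ heatKernel t) x := by
  set A : ℝ := (4 * π * t) ^ (-(finrank ℝ E : ℝ) / 2)
  set M := ∫ y, ‖y‖ ^ 2 * f y with hM
  set B := A * exp (-(‖x‖ ^ 2 + M) / (2 * t)) with hB
  have htangent (y : E) : B * (1 + (M - ‖y‖ ^ 2) / (2 * t)) ≤ heatKernel t (x - y) := by
    have hnorm : ‖x - y‖ ^ 2 ≤ 2 * (‖x‖ ^ 2 + ‖y‖ ^ 2) := by
      nlinarith [parallelogram_law_with_norm ℝ x y, sq_nonneg ‖x + y‖]
    calc B * (1 + (M - ‖y‖ ^ 2) / (2 * t)) ≤ B * exp ((M - ‖y‖ ^ 2) / (2 * t)) := by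
          gcongr
          linarith [add_one_le_exp ((M - ‖y‖ ^ 2) / (2 * t))]
      _ = A * exp (-(2 * (‖x‖ ^ 2 + ‖y‖ ^ 2)) / (4 * t)) := by
          rw [hB, mul_assoc, ← exp_add]
          congr 2
          field_simp
          ring
      _ ≤ heatKernel t (x - y) := by
          unfold heatKernel
          gcongr
  have hintegral : ∫ y, B * (1 + M / (2 * t)) * f y - B / (2 * t) * (‖y‖ ^ 2 * f y) = B := by
    rw [integral_sub (hf.integrable.const_mul _) (hf.integrable_norm_sq_mul.const_mul _),
      integral_const_mul, integral_const_mul, hf.integral_eq_one, ← hM]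
    ring
  rw [← hintegral]
  refine integral_mono
    ((hf.integrable.const_mul _).sub (hf.integrable_norm_sq_mul.const_mul _))
    ((hasGaussianBound_heatKernel ht).convolutionExistsAt hf.integrable x) fun y => ?_
  calc B * (1 + M / (2 * t)) * f y - B / (2 * t) * (‖y‖ ^ 2 * f y)
      = f y * (B * (1 + (M - ‖y‖ ^ 2) / (2 * t))) := by ring
    _ ≤ f y * heatKernel t (x - y) := mul_le_mul_of_nonneg_left (htangent y) (hf.nonneg y)

lemma abs_log_convolution_heatKernel_le (hf : IsSecondMomentDensity f) (ht : 0 < t) (x : E) :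
    |log ((f ⋆ heatKernel t) x)| ≤
      finrank ℝ E / 2 * |log (4 * π * t)| + (‖x‖ ^ 2 + ∫ y, ‖y‖ ^ 2 * f y) / (2 * t) := by
  have hpi : 0 < 4 * π * t := by positivity
  have hM : 0 ≤ ∫ y, ‖y‖ ^ 2 * f y :=
    integral_nonneg fun y => mul_nonneg (sq_nonneg _) (hf.nonneg y)
  have hquot : 0 ≤ (‖x‖ ^ 2 + ∫ y, ‖y‖ ^ 2 * f y) / (2 * t) := by positivity
  have hupper := log_le_log (hf.convolution_heatKernel_pos ht x) (hf.convolution_heatKernel_le ht x)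
  have hlower := log_le_log (by positivity) (hf.le_convolution_heatKernel ht x)
  rw [log_mul (by positivity) (exp_ne_zero _), log_exp, neg_div (2 * t)] at hlower
  rw [log_rpow hpi] at hupper hlower
  have hdim : (0 : ℝ) ≤ finrank ℝ E / 2 := by positivity
  have := mul_le_mul_of_nonneg_left (neg_abs_le (log (4 * π * t))) hdim
  have := mul_le_mul_of_nonneg_left (le_abs_self (log (4 * π * t))) hdim
  rw [abs_le]
  constructor <;> linarith

lemma exists_abs_log_add_one_le (hf : IsSecondMomentDensity f) {a b : ℝ}
    (ha : 0 < a) : ∃ C, 0 ≤ C ∧ ∀ t ∈ Icc a b, ∀ x : E,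
      |log ((f ⋆ heatKernel t) x) + 1| ≤ C * (1 + ‖x‖ ^ 2) := by
  set M := ∫ y, ‖y‖ ^ 2 * f y
  set L := max |log (4 * π * a)| |log (4 * π * b)|
  have hM : 0 ≤ M := integral_nonneg fun y => mul_nonneg (sq_nonneg _) (hf.nonneg y)
  have : 0 ≤ L := le_max_of_le_left (abs_nonneg _)
  refine ⟨finrank ℝ E / 2 * L + (1 + M) / (2 * a) + 1, by positivity, fun t ht x => ?_⟩
  have ht0 : 0 < t := ha.trans_le ht.1
  have hlog : |log (4 * π * t)| ≤ L :=
    abs_le_max_abs_abs (log_le_log (by positivity) (by gcongr; exact ht.1))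
      (log_le_log (by positivity) (by gcongr; exact ht.2))
  calc |log ((f ⋆ heatKernel t) x) + 1|
      ≤ |log ((f ⋆ heatKernel t) x)| + 1 := (abs_add_le _ _).trans_eq (by rw [abs_one])
    _ ≤ finrank ℝ E / 2 * |log (4 * π * t)| + (‖x‖ ^ 2 + M) / (2 * t) + 1 := by
        gcongr; exact hf.abs_log_convolution_heatKernel_le ht0 x
    _ ≤ finrank ℝ E / 2 * L * (1 + ‖x‖ ^ 2) + (1 + M) * (1 + ‖x‖ ^ 2) / (2 * a) +
          1 * (1 + ‖x‖ ^ 2) := by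
        gcongr ?_ + ?_ / (2 * ?_) + ?_
        · exact (mul_le_mul_of_nonneg_left hlog (by positivity)).trans
            (le_mul_of_one_le_right (by positivity) (by simp))
        · nlinarith [sq_nonneg ‖x‖]
        · exact ht.1
        · simp
    _ = (finrank ℝ E / 2 * L + (1 + M) / (2 * a) + 1) * (1 + ‖x‖ ^ 2) := by ring

lemma abs_convolution_le (hf : IsSecondMomentDensity f) {C : ℝ} (ht : 0 < t)
    (hk : ∀ x, |k x| ≤ C * heatKernel t x) (x : E) :
    |(f ⋆ k) x| ≤ C * (f ⋆ heatKernel t) x := by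
  have hint : Integrable fun y => f y * heatKernel t (x - y) :=
    (hasGaussianBound_heatKernel ht).convolutionExistsAt hf.integrable x
  simp only [convolution_lsmul, smul_eq_mul, ← integral_const_mul, ← norm_eq_abs]
  refine norm_integral_le_of_norm_le (hint.const_mul C) (ae_of_all _ fun y => ?_)
  rw [norm_mul, norm_of_nonneg (hf.nonneg y), mul_left_comm]
  exact mul_le_mul_of_nonneg_left (hk (x - y)) (hf.nonneg y)

lemma integrable_one_add_norm_sq_mul_convolution_heatKernel (hf : IsSecondMomentDensity f)
    (ht : 0 < t) : Integrable fun x => (1 + ‖x‖ ^ 2) * (f ⋆ heatKernel t) x := by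
  have hG := hasGaussianBound_heatKernel (E := E) ht
  have hGsq : HasGaussianBound fun x : E => ‖x‖ ^ 2 * heatKernel t x := by
    have := hG.continuous
    refine .of_norm_le_mul (by fun_prop) zero_le_one ht fun x => ?_
    have := heatKernel_pos ht x
    rw [norm_of_nonneg (by positivity), one_mul]
    gcongr
    linarith
  have hcont := hG.continuous_convolution hf.integrable
  refine (((hG.integrable_convolution hf.integrable).fun_add
    ((hGsq.integrable_convolution hf.integrable).const_mul 2)).fun_add
    ((hG.integrable_convolution hf.integrable_norm_sq_mul).const_mul 2)).mono'
    (by fun_prop : Continuous _).aestronglyMeasurable (ae_of_all _ fun x => ?_)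
  have hfG : Integrable fun y => f y * heatKernel t (x - y) :=
    hG.convolutionExistsAt hf.integrable x
  have hfGsq := (hGsq.convolutionExistsAt hf.integrable x).const_mul 2
  have hfsqG := (hG.convolutionExistsAt hf.integrable_norm_sq_mul x).const_mul 2
  simp only [ContinuousLinearMap.lsmul_apply, smul_eq_mul] at hfGsq hfsqG
  rw [norm_of_nonneg (mul_nonneg (by positivity) (hf.convolution_heatKernel_pos ht x).le)]
  simp only [convolution_lsmul, smul_eq_mul, ← integral_const_mul]
  rw [← integral_add hfG hfGsq, ← integral_add (hfG.fun_add hfGsq) hfsqG]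
  refine integral_mono (hfG.const_mul _) ((hfG.fun_add hfGsq).fun_add hfsqG) fun y => ?_
  have hnorm : ‖x‖ ^ 2 ≤ 2 * ‖x - y‖ ^ 2 + 2 * ‖y‖ ^ 2 := by
    have := parallelogram_law_with_norm ℝ (x - y) y
    rw [sub_add_cancel] at this
    nlinarith [sq_nonneg ‖x - y - y‖]
  nlinarith [mul_le_mul_of_nonneg_right hnorm
    (mul_nonneg (hf.nonneg y) (heatKernel_pos ht (x - y)).le)]

lemma integrable_log_add_one_mul_convolution (hf : IsSecondMomentDensity f) (ht : 0 < t)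
    (hk : HasGaussianBound k) :
    Integrable fun x => (log ((f ⋆ heatKernel t) x) + 1) * (f ⋆ k) x := by
  obtain ⟨C, hC, hlog⟩ := hf.exists_abs_log_add_one_le (b := t) ht
  obtain ⟨K, τ, -, hτ, hle⟩ := hk.exists_norm_le
  have hu := (hasGaussianBound_heatKernel ht).continuous_convolution hf.integrable
  have hfk := hk.continuous_convolution hf.integrable
  have hpos (x : E) := (hf.convolution_heatKernel_pos ht x).ne'
  refine ((hf.integrable_one_add_norm_sq_mul_convolution_heatKernel hτ).const_mul
    (C * K)).mono' (by fun_prop (disch := exact hpos) : Continuous _).aestronglyMeasurable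
    (ae_of_all _ fun x => ?_)
  rw [norm_mul]
  calc |log ((f ⋆ heatKernel t) x) + 1| * |(f ⋆ k) x|
      ≤ C * (1 + ‖x‖ ^ 2) * (K * (f ⋆ heatKernel τ) x) :=
        mul_le_mul (hlog t ⟨le_rfl, le_rfl⟩ x) (hf.abs_convolution_le hτ hle x) (abs_nonneg _)
          (by positivity)
    _ = C * K * ((1 + ‖x‖ ^ 2) * (f ⋆ heatKernel τ) x) := by ring

lemma integral_log_add_one_mul_secondDeriv (hf : IsSecondMomentDensity f) (ht : 0 < t) (v : E) :
    ∫ x, (log ((f ⋆ heatKernel t) x) + 1) * (f ⋆ heatKernelSecondDeriv t v) x =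
      -directionalFisherInfo f t v := by
  have hJ := integrable_convolution_heatKernelDeriv_sq_div hf.nonneg hf.integral_eq_one ht v
  have hsecond := hf.integrable_log_add_one_mul_convolution ht
    (hasGaussianBound_heatKernelSecondDeriv ht v)
  have hzero := integral_eq_zero_of_hasLineDerivAt (v := v)
    (hf.integrable_log_add_one_mul_convolution ht (hasGaussianBound_heatKernelDeriv ht v))
    (hJ.fun_add hsecond) fun x => by
      have hpos := (hf.convolution_heatKernel_pos ht x).ne'
      have hu := hasLineDerivAt_convolution_heatKernel hf.integrable ht x v
      have hd := hasLineDerivAt_convolution_heatKernelDeriv hf.integrable ht x v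
      have hlog := (HasDerivAt.log hu (by simpa using hpos)).add_const 1
      simpa [HasLineDerivAt, sq, div_mul_eq_mul_div] using HasDerivAt.fun_mul hlog hd
  rw [integral_add hJ hsecond] at hzero
  rw [directionalFisherInfo]
  linarith

lemma integral_log_add_one_mul_laplacian (hf : IsSecondMomentDensity f) (ht : 0 < t) {ι : Type*}
    [Fintype ι] (b : OrthonormalBasis ι ℝ E) :
    ∫ x, (log ((f ⋆ heatKernel t) x) + 1) * (f ⋆ heatKernelLaplacian t) x =
      -∑ i, directionalFisherInfo f t (b i) := by
  have hsum (x : E) : (f ⋆ heatKernelLaplacian t) x =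
      ∑ i, (f ⋆ heatKernelSecondDeriv t (b i)) x := by
    simp only [convolution_lsmul, ← sum_heatKernelSecondDeriv b, Finset.smul_sum]
    exact integral_finsetSum _ fun i _ =>
      (hasGaussianBound_heatKernelSecondDeriv ht (b i)).convolutionExistsAt hf.integrable x
  simp only [hsum, Finset.mul_sum]
  rw [integral_finsetSum _ fun i _ => hf.integrable_log_add_one_mul_convolution ht
    (hasGaussianBound_heatKernelSecondDeriv ht (b i)), ← Finset.sum_neg_distrib]
  exact Finset.sum_congr rfl fun i _ => hf.integral_log_add_one_mul_secondDeriv ht (b i)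

lemma integrable_convolution_mul_log (hf : IsSecondMomentDensity f) (ht : 0 < t) :
    Integrable fun x => (f ⋆ heatKernel t) x * log ((f ⋆ heatKernel t) x) := by
  have hG := hasGaussianBound_heatKernel (E := E) ht
  refine ((hf.integrable_log_add_one_mul_convolution ht hG).sub
    (hG.integrable_convolution hf.integrable)).congr (ae_of_all _ fun x => ?_)
  simp only [Pi.sub_apply]
  ring

lemma exists_abs_log_add_one_mul_laplacian_le (hf : IsSecondMomentDensity f) {a b : ℝ}
    (ha : 0 < a) (hab : a ≤ b) : ∃ C, ∀ t ∈ Icc a b, ∀ x : E,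
      |(log ((f ⋆ heatKernel t) x) + 1) * (f ⋆ heatKernelLaplacian t) x| ≤
        C * ((1 + ‖x‖ ^ 2) * (f ⋆ heatKernel (2 * b)) x) := by
  obtain ⟨C, hC, hlog⟩ := hf.exists_abs_log_add_one_le (b := b) ha
  obtain ⟨K, -, hlaplacian⟩ := exists_abs_heatKernelLaplacian_le (E := E) ha hab
  refine ⟨C * K, fun t ht x => ?_⟩
  have hb : 0 < 2 * b := by linarith
  rw [abs_mul]
  calc |log ((f ⋆ heatKernel t) x) + 1| * |(f ⋆ heatKernelLaplacian t) x|
      ≤ C * (1 + ‖x‖ ^ 2) * (K * (f ⋆ heatKernel (2 * b)) x) :=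
        mul_le_mul (hlog t ht x) (hf.abs_convolution_le hb (hlaplacian t ht) x) (abs_nonneg _)
          (by positivity)
    _ = C * K * ((1 + ‖x‖ ^ 2) * (f ⋆ heatKernel (2 * b)) x) := by ring

lemma hasDerivAt_integral_mul_log (hf : IsSecondMomentDensity f) (ht : 0 < t) {ι : Type*}
    [Fintype ι] (b : OrthonormalBasis ι ℝ E) :
    HasDerivAt (fun r => ∫ x, (f ⋆ heatKernel r) x * log ((f ⋆ heatKernel r) x))
      (-∑ i, directionalFisherInfo f t (b i)) t := by
  obtain ⟨C, hC⟩ := hf.exists_abs_log_add_one_mul_laplacian_le (half_pos ht)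
    (by linarith : t / 2 ≤ 2 * t)
  have hmem : Ioo (t / 2) (2 * t) ∈ nhds t := Ioo_mem_nhds (by linarith) (by linarith)
  rw [← hf.integral_log_add_one_mul_laplacian ht b]
  refine (hasDerivAt_integral_of_dominated_loc_of_deriv_le
    (F := fun r x => (f ⋆ heatKernel r) x * log ((f ⋆ heatKernel r) x))
    (F' := fun r x => (log ((f ⋆ heatKernel r) x) + 1) * (f ⋆ heatKernelLaplacian r) x) hmem
    ?_ (hf.integrable_convolution_mul_log ht)
    (hf.integrable_log_add_one_mul_convolution ht
      (hasGaussianBound_heatKernelLaplacian ht)).aestronglyMeasurable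
    (ae_of_all _ fun x r hr => hC r ⟨hr.1.le, hr.2.le⟩ x)
    ((hf.integrable_one_add_norm_sq_mul_convolution_heatKernel
      (by positivity : 0 < 2 * (2 * t))).const_mul C) (ae_of_all _ fun x r hr => ?_)).2
  · filter_upwards [hmem] with r hr
    exact (hf.integrable_convolution_mul_log (by linarith [hr.1])).aestronglyMeasurable
  · have hr0 : 0 < r := by linarith [hr.1]
    exact (hasDerivAt_mul_log (hf.convolution_heatKernel_pos hr0 x).ne').comp r
      (hasDerivAt_convolution_heatKernel_time hf.integrable hr0 x)

end IsSecondMomentDensity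

end Entropy

section Gradient

variable {E : Type*} [NormedAddCommGroup E] [InnerProductSpace ℝ E] [FiniteDimensional ℝ E]
  {ι : Type*} [Fintype ι]

lemma norm_gradient_sq (b : OrthonormalBasis ι ℝ E) (g : E → ℝ) (x : E) :
    ‖gradient g x‖ ^ 2 = ∑ i, fderiv ℝ g x (b i) ^ 2 := by
  simp only [← b.sum_sq_norm_inner_left, gradient, InnerProductSpace.toDual_symm_apply,
    norm_eq_abs, sq_abs]

variable [MeasurableSpace E] [BorelSpace E] {f : E → ℝ} {t : ℝ}

namespace IsSecondMomentDensity

lemma norm_gradient_log_sq_mul (hf : IsSecondMomentDensity f) (ht : 0 < t)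
    (b : OrthonormalBasis ι ℝ E) (x : E) :
    ‖gradient (fun y => log ((f ⋆ heatKernel t) y)) x‖ ^ 2 * (f ⋆ heatKernel t) x =
      ∑ i, (f ⋆ heatKernelDeriv t (b i)) x ^ 2 / (f ⋆ heatKernel t) x := by
  have hpos := (hf.convolution_heatKernel_pos ht x).ne'
  have hdiff := differentiable_convolution_heatKernel hf.integrable ht x
  have hline (v : E) : fderiv ℝ (f ⋆ heatKernel t) x v = (f ⋆ heatKernelDeriv t v) x :=
    hdiff.lineDeriv_eq_fderiv.symm.trans
      (hasLineDerivAt_convolution_heatKernel hf.integrable ht x v).lineDeriv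
  rw [norm_gradient_sq b, Finset.sum_mul]
  refine Finset.sum_congr rfl fun i _ => ?_
  rw [fderiv.log hdiff hpos, smul_apply, hline, smul_eq_mul]
  field_simp

lemma integral_norm_gradient_log_sq_mul (hf : IsSecondMomentDensity f) (ht : 0 < t)
    (b : OrthonormalBasis ι ℝ E) :
    ∫ x, ‖gradient (fun y => log ((f ⋆ heatKernel t) y)) x‖ ^ 2 * (f ⋆ heatKernel t) x =
      ∑ i, directionalFisherInfo f t (b i) := by
  simp only [hf.norm_gradient_log_sq_mul ht b]
  exact integral_finsetSum _ fun i _ =>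
    integrable_convolution_heatKernelDeriv_sq_div hf.nonneg hf.integral_eq_one ht (b i)

end IsSecondMomentDensity

end Gradient

section EntropyPower

lemma exp_mul_le_of_hasDerivAt_le_div {H I : ℝ → ℝ} {a c s t : ℝ} (hc : 0 ≤ c) (ha : 0 ≤ a)
    (hderiv : ∀ r, s ≤ r → HasDerivAt H (I r) r)
    (hle : ∀ r, s ≤ r → I r ≤ a / (1 + c * (r - s) * a)) (hst : s ≤ t) :
    exp (c * H t) ≤ exp (c * H s) * (1 + c * (t - s) * a) := by
  have hpos (r : ℝ) (hr : s ≤ r) : 0 < 1 + c * (r - s) * a := by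
    have := sub_nonneg.2 hr
    positivity
  have hgap (r : ℝ) (hr : s ≤ r) : HasDerivAt (fun r => c * H r - log (1 + c * (r - s) * a))
      (c * I r - c * a / (1 + c * (r - s) * a)) r := by
    have hlin : HasDerivAt (fun r => 1 + c * (r - s) * a) (c * a) r := by
      simpa using ((((hasDerivAt_id r).sub_const s).const_mul c).mul_const a).const_add 1
    exact ((hderiv r hr).const_mul c).sub (hlin.log (hpos r hr).ne')
  have hanti : AntitoneOn (fun r => c * H r - log (1 + c * (r - s) * a)) (Ici s) := by
    refine antitoneOn_of_hasDerivWithinAt_nonpos (convex_Ici s)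
      (fun r hr => (hgap r hr).continuousAt.continuousWithinAt)
      (fun r hr => (hgap r (interior_subset hr)).hasDerivWithinAt) fun r hr => ?_
    rw [mul_div_assoc, ← mul_sub]
    exact mul_nonpos_of_nonneg_of_nonpos hc (sub_nonpos.2 (hle r (interior_subset hr)))
  have hendpoints := hanti (mem_Ici.2 le_rfl) hst hst
  simp only [sub_self, mul_zero, zero_mul, add_zero, log_one, sub_zero] at hendpoints
  rw [← exp_log (hpos t hst), ← exp_add, exp_le_exp]
  linarith

variable {n : ℕ} {f : EuclideanSpace ℝ (Fin n) → ℝ} {s t : ℝ}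

lemma heatSol_eq_convolution (f : EuclideanSpace ℝ (Fin n) → ℝ) (t : ℝ) :
    heatSol n f t = f ⋆ heatKernel t := by
  ext x
  simp only [heatSol, convolution_lsmul, heatKernel, smul_eq_mul, finrank_euclideanSpace_fin,
    mul_comm (f _)]

namespace IsSecondMomentDensity

lemma fisherInfo_eq_sum (hf : IsSecondMomentDensity f) (ht : 0 < t) :
    fisherInfo n f t = ∑ i, directionalFisherInfo f t (EuclideanSpace.basisFun (Fin n) ℝ i) := by
  simp only [fisherInfo, heatSol_eq_convolution]
  exact hf.integral_norm_gradient_log_sq_mul ht _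

lemma hasDerivAt_shannonEntropy (hf : IsSecondMomentDensity f) (ht : 0 < t) :
    HasDerivAt (shannonEntropy n f) (fisherInfo n f t) t := by
  have := (hf.hasDerivAt_integral_mul_log ht (EuclideanSpace.basisFun (Fin n) ℝ)).fun_neg
  rw [neg_neg, ← hf.fisherInfo_eq_sum ht] at this
  simp only [← heatSol_eq_convolution] at this
  exact this

lemma fisherInfo_nonneg (hf : IsSecondMomentDensity f) (ht : 0 < t) : 0 ≤ fisherInfo n f t :=
  integral_nonneg fun x => mul_nonneg (sq_nonneg _) <| by
    rw [heatSol_eq_convolution]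
    exact (hf.convolution_heatKernel_pos ht x).le

lemma fisherInfo_add_le (hf : IsSecondMomentDensity f) (hs : 0 < s) (ht : 0 < t) (c : ℝ) :
    fisherInfo n f (s + t) ≤ c ^ 2 * fisherInfo n f s + (1 - c) ^ 2 * (n / (2 * t)) := by
  rw [hf.fisherInfo_eq_sum hs, hf.fisherInfo_eq_sum (add_pos hs ht)]
  calc ∑ i, directionalFisherInfo f (s + t) (EuclideanSpace.basisFun (Fin n) ℝ i)
      ≤ ∑ i, (c ^ 2 * directionalFisherInfo f s (EuclideanSpace.basisFun (Fin n) ℝ i) +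
          (1 - c) ^ 2 * (‖EuclideanSpace.basisFun (Fin n) ℝ i‖ ^ 2 / (2 * t))) :=
        Finset.sum_le_sum fun i _ =>
          directionalFisherInfo_add_le hf.nonneg hf.integral_eq_one hs ht _ c
    _ = _ := by
        simp only [OrthonormalBasis.norm_eq_one, Finset.sum_add_distrib, ← Finset.mul_sum,
          Finset.sum_const, Finset.card_univ, Fintype.card_fin, nsmul_eq_mul]
        ring

lemma fisherInfo_le_div (hf : IsSecondMomentDensity f) (hn : 1 ≤ n) (hs : 0 < s) (hst : s ≤ t) :
    fisherInfo n f t ≤ fisherInfo n f s / (1 + 2 / n * (t - s) * fisherInfo n f s) := by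
  rcases hst.eq_or_lt with rfl | hst
  · simp
  have : (0 : ℝ) < n := by exact_mod_cast hn
  have hτ : 0 < t - s := sub_pos.2 hst
  have hI := hf.fisherInfo_nonneg hs
  set a := fisherInfo n f s
  have : 0 < 1 + 2 / n * (t - s) * a := by positivity
  -- `fisherInfo_add_le` is applied at the `c` minimising its right-hand side.
  calc fisherInfo n f t
      = fisherInfo n f (s + (t - s)) := by rw [add_sub_cancel]
    _ ≤ (1 / (1 + 2 / n * (t - s) * a)) ^ 2 * a +
          (1 - 1 / (1 + 2 / n * (t - s) * a)) ^ 2 * (n / (2 * (t - s))) :=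
        hf.fisherInfo_add_le hs hτ _
    _ = a / (1 + 2 / n * (t - s) * a) := by
        field_simp
        ring

end IsSecondMomentDensity

end EntropyPower

end HeatFlow

open HeatFlow

theorem entropy_power_linear_growth_general (n : ℕ) (hn : 1 ≤ n)
    (f : EuclideanSpace ℝ (Fin n) → ℝ) (hf_nonneg : ∀ x, 0 ≤ f x)
    (hf_moment : Integrable fun x => ‖x‖ ^ 2 * f x) (hf_int : ∫ x, f x = 1) :
    ∀ s t : ℝ, 0 < s → s ≤ t →
      entropyPower n f t - entropyPower n f s ≤
        (t - s) * (2 / (n : ℝ)) * fisherInfo n f s * entropyPower n f s := by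
  intro s t hs hst
  have hf : IsSecondMomentDensity f := ⟨hf_nonneg, hf_int, hf_moment⟩
  have hgrowth : entropyPower n f t ≤
      entropyPower n f s * (1 + 2 / n * (t - s) * fisherInfo n f s) :=
    exp_mul_le_of_hasDerivAt_le_div (by positivity) (hf.fisherInfo_nonneg hs)
      (fun r hr => hf.hasDerivAt_shannonEntropy (hs.trans_le hr))
      (fun r hr => hf.fisherInfo_le_div hn hs hr) hst
  linarith

/-- Linear growth bound for the entropy power on `ℝⁿ`:
`N(u(t)) - N(u(s)) ≤ (t-s)·(2/n)·I(u(s))·N(u(s))` for `0 < s ≤ t`. -/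
theorem entropy_power_linear_growth (n : ℕ) (hn : 1 ≤ n)
    (f : EuclideanSpace ℝ (Fin n) → ℝ)
    (hf_cont : Continuous f) (hf_nonneg : ∀ x, 0 ≤ f x)
    (hf_supp : HasCompactSupport f)
    (hf_int : ∫ x, f x = 1) :
    ∀ s t : ℝ, 0 < s → s ≤ t →
      entropyPower n f t - entropyPower n f s ≤
        (t - s) * (2 / (n : ℝ)) * fisherInfo n f s * entropyPower n f s := by
  exact entropy_power_linear_growth_general n hn f hf_nonneg
    ((by fun_prop : Continuous fun x => ‖x‖ ^ 2 * f x).integrable_of_hasCompactSupport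
      hf_supp.mul_left) hf_int
end
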